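/- arXiv:0902.3419 — 2 statements merged into one kernel-verified Lean document; each statement's English description precedes it below -/
import Mathlib

section
/- Under the stated assumptions, the expected value of Y_N satisfies E(Y_N) = μ log N + o(√(log N)) as N → ∞; in particular E(Y_N) ∼ μ log N. -/
open scoped BigOperators ENNReal
open Filter Asymptotics

noncomputable section

/-- `af P m n` is the number of ordered `m`-tuples `(n₁,…,n_m)` of elements of `P`
with product `n` (so `af P 0 n = 1` iff `n = 1`). -/
def af (P : Set ℕ) (m n : ℕ) : ℕ :=
  Nat.card {t : Fin m → ℕ // (∀ i, t i ∈ P) ∧ ∏ i, t i = n}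

/-- `aTot P n = a(n) = Σ_{m ≥ 0} a_m(n)`. -/
def aTot (P : Set ℕ) (n : ℕ) : ℝ := ∑' m : ℕ, (af P m n : ℝ)

/-- `Acum P N = A(N) = Σ_{1 ≤ n ≤ N} a(n)`. -/
def Acum (P : Set ℕ) (N : ℕ) : ℝ := ∑ n ∈ Finset.Icc 1 N, aTot P n

/-- The Dirichlet series `𝒫(x) = Σ_{n ∈ 𝒫} n^{-x}` at a real point. -/
def Pval (P : Set ℕ) (x : ℝ) : ℝ := ∑' n : P, ((n : ℕ) : ℝ) ^ (-x)

/-- `𝒫'(x) = -Σ_{n ∈ 𝒫} n^{-x} log n`. -/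
def Pderiv1 (P : Set ℕ) (x : ℝ) : ℝ := -∑' n : P, ((n : ℕ) : ℝ) ^ (-x) * Real.log (n : ℕ)

/-- `𝒫''(x) = Σ_{n ∈ 𝒫} n^{-x} (log n)^2`. -/
def Pderiv2 (P : Set ℕ) (x : ℝ) : ℝ := ∑' n : P, ((n : ℕ) : ℝ) ^ (-x) * (Real.log (n : ℕ)) ^ 2

/-- The abscissa of convergence `κ` of the Dirichlet series of `P`, as an extended real
(`⊥` when `P` is finite). -/
def kappa (P : Set ℕ) : EReal :=
  sInf {x : EReal | ∃ r : ℝ, x = (r : EReal) ∧ Summable (fun n : P => ((n : ℕ) : ℝ) ^ (-r))}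

open Classical in
/-- The (possibly infinite) value `𝒫(x) ∈ (0,∞]` of the Dirichlet series at an
extended-real point; at `x = -∞` every term `n^{-x}` is infinite. -/
def PvalE (P : Set ℕ) (x : EReal) : ℝ≥0∞ :=
  if x = ⊥ then ⊤ else ∑' n : P, ENNReal.ofReal (((n : ℕ) : ℝ) ^ (-x.toReal))

/-!
Since `𝒫(ρ) = 1`, the weights `n ^ (-ρ)` make `X = log n`, `n ∈ 𝒫`, a random step; let `Sₘ` be the
sum of `m` independent steps. With `y = log N`, the numbers `N ^ (-ρ) * A(N)` and
`N ^ (-ρ) * ∑ m * a_m(n)` are the values at `y` of the renewal function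
`h y = ∑ₘ E e ^ (-ρ * (y - Sₘ)) 1_{Sₘ ≤ y}` and of its analogue `b y` with weight `m`. Also
`μ = 1 / E X`.

Let `D y = b y - (y / E X) * h y`. Up to an exponentially small error, `D` is the covariance of the
martingale `m - Sₘ / E X` with the martingale of conditional expectations `h (y - Sₘ)`. The first
has variance `O(y)`. The increments of the second are small away from the end of the walk, because
`h` is asymptotically constant on the cosets of the group generated by the steps (Choquet–Deny).
By Cauchy–Schwarz `D y = o(√y)`, and `h` is bounded below, so `b y / h y = y / E X + o(√y)`.

Cauchy–Schwarz enters as AM–GM with a free parameter, one step at a time; the resulting inequality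
`f y ≤ E f (y - X) + error` is summed over the steps by a maximum principle with explicit barriers.
-/

open Set Topology

lemma exists_tendsto_max_sub_of_abs_le {D : ℝ → ℝ} {C : ℝ} (hD : ∀ y, |D y| ≤ C) :
    ∃ s, Tendsto (fun y => max (D y - s) 0) atTop (𝓝 0) ∧
      ∃ F ≤ (atTop : Filter ℝ), F.NeBot ∧ Tendsto D F (𝓝 s) := by
  have hle : IsBoundedUnder (· ≤ ·) atTop D := isBoundedUnder_of ⟨C, fun y => le_of_abs_le (hD y)⟩
  have hge : IsCoboundedUnder (· ≤ ·) atTop D :=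
    IsBoundedUnder.isCoboundedUnder_le
      (isBoundedUnder_of ⟨-C, fun y => (abs_le.1 (hD y)).1⟩)
  obtain ⟨U, hU, hDU⟩ := mapClusterPt_iff_ultrafilter.1 (MapClusterPt.limsup hge hle)
  refine ⟨limsup D atTop, ?_, U, hU, U.neBot, hDU⟩
  refine Metric.tendsto_nhds.2 fun ε hε => ?_
  filter_upwards [eventually_lt_of_limsup_lt (lt_add_of_pos_right _ hε) hle] with y hy
  rw [Real.dist_0_eq_abs, abs_of_nonneg (le_max_right _ _)]
  exact max_lt (by linarith) hε

lemma tendsto_mul_exp_neg_mul_atTop (C : ℝ) {θ : ℝ} (hθ : 0 < θ) :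
    Tendsto (fun y : ℝ => C * Real.exp (-θ * y)) atTop (𝓝 0) := by
  simpa using (Real.tendsto_exp_atBot.comp
    (tendsto_id.const_mul_atTop_of_neg (neg_lt_zero.2 hθ))).const_mul C

lemma exists_finset_bracketing (H : AddSubgroup ℝ) {δ : ℝ} (hδ : 0 < δ) (L : ℝ) :
    ∃ F : Finset ℝ, (∀ a ∈ F, a ∈ H) ∧
      ∀ s ∈ H, |s| ≤ L → ∃ a ∈ F, ∃ b ∈ F, a ≤ s ∧ s ≤ b ∧ b ≤ a + δ := by
  by_cases hd : ∃ d ∈ H, 0 < d ∧ d ≤ δ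
  · obtain ⟨d, hdH, hd0, hdδ⟩ := hd
    refine ⟨(Finset.Icc ⌊-L / d⌋ (⌊L / d⌋ + 1)).image fun k : ℤ => k * d, ?_, fun s _ hs => ?_⟩
    · simp only [Finset.forall_mem_image]
      exact fun k _ => by simpa using H.zsmul_mem hdH k
    · have hlower : ⌊-L / d⌋ ≤ ⌊s / d⌋ := Int.floor_le_floor (by gcongr; exact (abs_le.1 hs).1)
      have hupper : ⌊s / d⌋ ≤ ⌊L / d⌋ := Int.floor_le_floor (by gcongr; exact (abs_le.1 hs).2)
      have hfloor := (le_div_iff₀ hd0).1 (Int.floor_le (s / d))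
      have hfloor' := (div_lt_iff₀ hd0).1 (Int.lt_floor_add_one (s / d))
      refine ⟨_, Finset.mem_image_of_mem _ (Finset.mem_Icc.2 ⟨hlower, by lia⟩), _,
        Finset.mem_image_of_mem _ (Finset.mem_Icc.2 ⟨hlower.trans (by lia), by lia⟩ :
          ⌊s / d⌋ + 1 ∈ _), hfloor, ?_, ?_⟩ <;> push_cast <;> linarith
  · push Not at hd
    have hfin : {s | s ∈ H ∧ |s| ≤ L}.Finite := by
      refine .of_finite_image (f := fun s => ⌊s / δ⌋) ((finite_Icc ⌊-L / δ⌋ ⌊L / δ⌋).subset ?_) ?_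
      · rintro _ ⟨s, ⟨-, hs⟩, rfl⟩
        have := abs_le.1 hs
        exact ⟨Int.floor_le_floor (by gcongr; exact this.1),
          Int.floor_le_floor (by gcongr; exact this.2)⟩
      · rintro s ⟨hs, -⟩ t ⟨ht, -⟩ hst
        have hlt : |s - t| < δ := by
          have := Int.abs_sub_lt_one_of_floor_eq_floor hst
          rwa [← sub_div, abs_div, abs_of_pos hδ, div_lt_one hδ] at this
        have habs : |s - t| ∈ H := by
          obtain h | h := abs_choice (s - t) <;> rw [h]
          exacts [H.sub_mem hs ht, H.neg_mem (H.sub_mem hs ht)]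
        by_contra hne
        exact hlt.not_gt (hd _ habs (abs_pos.2 (sub_ne_zero.2 hne)))
    exact ⟨hfin.toFinset, fun a ha => (hfin.mem_toFinset.1 ha).1, fun s hs hsL =>
      have hmem := hfin.mem_toFinset.2 ⟨hs, hsL⟩
      ⟨s, hmem, s, hmem, le_rfl, le_rfl, by linarith⟩⟩

/-- The law of a positive random step: it takes the value `step p` with probability `weight p`,
is bounded below by `minStep`, and has a finite exponential moment of order `rate`. The steps
arising from `P` are `log n`, `n ∈ P`, with probabilities `n ^ (-ρ)`. -/
structure StepLaw (ι : Type*) where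
  weight : ι → ℝ
  step : ι → ℝ
  minStep : ℝ
  rate : ℝ
  weight_pos : ∀ p, 0 < weight p
  hasSum_weight : HasSum weight 1
  minStep_pos : 0 < minStep
  minStep_le : ∀ p, minStep ≤ step p
  rate_pos : 0 < rate
  summable_exp : Summable fun p => weight p * Real.exp (rate * step p)

namespace StepLaw

variable {ι : Type*} (X : StepLaw ι)

lemma step_pos (p : ι) : 0 < X.step p := X.minStep_pos.trans_le (X.minStep_le p)

lemma nonempty (X : StepLaw ι) : Nonempty ι := by
  by_contra h
  rw [not_nonempty_iff] at h
  exact zero_ne_one (hasSum_empty.unique X.hasSum_weight)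

lemma hasSum_weight_mul_const (c : ℝ) : HasSum (fun p => X.weight p * c) c := by
  simpa using X.hasSum_weight.mul_right c

lemma summable_weight_mul {u : ι → ℝ} {C : ℝ} (hu : ∀ p, |u p| ≤ C) :
    Summable fun p => X.weight p * u p := by
  refine .of_norm_bounded (X.hasSum_weight.summable.mul_right C) fun p => ?_
  rw [norm_mul, Real.norm_of_nonneg (X.weight_pos p).le]
  exact mul_le_mul_of_nonneg_left (hu p) (X.weight_pos p).le

lemma hasSum_le_of_le {u : ι → ℝ} {S c : ℝ} (hS : HasSum (fun p => X.weight p * u p) S)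
    (hu : ∀ p, u p ≤ c) : S ≤ c :=
  hasSum_le (fun p => mul_le_mul_of_nonneg_left (hu p) (X.weight_pos p).le) hS
    (X.hasSum_weight_mul_const c)

lemma le_hasSum_of_le {u : ι → ℝ} {S c : ℝ} (hS : HasSum (fun p => X.weight p * u p) S)
    (hu : ∀ p, c ≤ u p) : c ≤ S :=
  hasSum_le (fun p => mul_le_mul_of_nonneg_left (hu p) (X.weight_pos p).le)
    (X.hasSum_weight_mul_const c) hS

/-- The mean `E X` of the step. -/
def mean : ℝ := ∑' p, X.weight p * X.step p

lemma summable_weight_mul_step_sq : Summable fun p => X.weight p * X.step p ^ 2 := by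
  have hη := X.rate_pos
  refine .of_nonneg_of_le (fun p => mul_nonneg (X.weight_pos p).le (sq_nonneg _)) (fun p => ?_)
    (X.summable_exp.mul_left (2 / X.rate ^ 2))
  have hx : 0 < X.rate * X.step p := mul_pos hη (X.step_pos p)
  have hexp := Real.quadratic_le_exp_of_nonneg hx.le
  have hsq : X.step p ^ 2 ≤ 2 / X.rate ^ 2 * Real.exp (X.rate * X.step p) := by
    rw [div_mul_eq_mul_div, le_div_iff₀ (by positivity)]
    nlinarith
  linarith [mul_le_mul_of_nonneg_left hsq (X.weight_pos p).le]

lemma summable_weight_mul_of_sq {u : ι → ℝ} (hu : Summable fun p => X.weight p * u p ^ 2) :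
    Summable fun p => X.weight p * |u p| := by
  refine .of_nonneg_of_le (fun p => mul_nonneg (X.weight_pos p).le (abs_nonneg _)) (fun p => ?_)
    (X.hasSum_weight.summable.add hu)
  rw [← sq_abs]
  nlinarith [mul_nonneg (X.weight_pos p).le (sq_nonneg (|u p| - 1)), X.weight_pos p,
    mul_nonneg (X.weight_pos p).le (abs_nonneg (u p))]

lemma hasSum_mean : HasSum (fun p => X.weight p * X.step p) X.mean := by
  refine Summable.hasSum ?_
  simpa only [abs_of_pos (X.step_pos _)] using
    X.summable_weight_mul_of_sq X.summable_weight_mul_step_sq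

lemma mean_pos : 0 < X.mean :=
  X.minStep_pos.trans_le (X.le_hasSum_of_le X.hasSum_mean X.minStep_le)

/-! ### The maximum principle -/

lemma step_induction {T : Set ℝ} (hT : ∀ y ∈ T, ∀ p, y - X.step p ∈ T) {K : ℝ}
    {motive : ℝ → Prop} (lt : ∀ y ∈ T, y < K → motive y)
    (ge : ∀ y ∈ T, K ≤ y → (∀ p, motive (y - X.step p)) → motive y) {y : ℝ} (hy : y ∈ T) :
    motive y := by
  have hbelow : ∀ n : ℕ, ∀ y ∈ T, y < K + n * X.minStep → motive y := by
    intro n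
    induction n with
    | zero => exact fun y hy h => lt y hy (by simpa using h)
    | succ n ih =>
      intro y hy h
      obtain hyK | hyK := lt_or_ge y K
      · exact lt y hy hyK
      · refine ge y hy hyK fun p => ih _ (hT y hy p) ?_
        push_cast at h
        linarith [X.minStep_le p]
  obtain ⟨n, hn⟩ := exists_nat_gt ((y - K) / X.minStep)
  rw [div_lt_iff₀ X.minStep_pos] at hn
  exact hbelow n y hy (by linarith)

/-- The truncated exponential `min 1 (e ^ (-θ * y))`, the building block of the barriers in the
maximum principle. -/
def cappedExp (θ y : ℝ) : ℝ := min 1 (Real.exp (-θ * y))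

lemma cappedExp_nonneg (θ y : ℝ) : 0 ≤ cappedExp θ y := le_min zero_le_one (Real.exp_pos _).le

lemma cappedExp_le_one (θ y : ℝ) : cappedExp θ y ≤ 1 := min_le_left _ _

lemma cappedExp_le_exp (θ y : ℝ) : cappedExp θ y ≤ Real.exp (-θ * y) := min_le_right _ _

lemma cappedExp_eq_one {θ y : ℝ} (hθ : 0 ≤ θ) (hy : y ≤ 0) : cappedExp θ y = 1 :=
  min_eq_left (Real.one_le_exp (by nlinarith))

lemma hasSum_cappedExp (θ y : ℝ) :
    HasSum (fun p => X.weight p * cappedExp θ (y - X.step p))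
      (∑' p, X.weight p * cappedExp θ (y - X.step p)) :=
  (X.summable_weight_mul (C := 1) fun p => by
    rw [abs_of_nonneg (cappedExp_nonneg _ _)]; exact cappedExp_le_one _ _).hasSum

/-- The exponential moment `E e ^ (rate * X)`. -/
def expMoment : ℝ := ∑' p, X.weight p * Real.exp (X.rate * X.step p)

lemma expMoment_nonneg : 0 ≤ X.expMoment :=
  tsum_nonneg fun p => mul_nonneg (X.weight_pos p).le (Real.exp_pos _).le

lemma tsum_cappedExp_le (y : ℝ) :
    ∑' p, X.weight p * cappedExp X.rate (y - X.step p) ≤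
      X.expMoment * Real.exp (-X.rate * y) := by
  refine hasSum_le (fun p => ?_) (X.hasSum_cappedExp _ y) (X.summable_exp.hasSum.mul_right _)
  rw [mul_assoc, ← Real.exp_add]
  refine mul_le_mul_of_nonneg_left ((cappedExp_le_exp _ _).trans_eq ?_) (X.weight_pos p).le
  ring_nf

/-- A bounded nonnegative function whose average over one step falls short of its value at
`y ≥ 0` by at least `e ^ (-θ * y)`. -/
def sourceBarrier (θ y : ℝ) : ℝ :=
  (1 - Real.exp (-θ * X.minStep))⁻¹ * (2 - cappedExp θ (y + X.minStep))

lemma one_sub_exp_minStep_pos {θ : ℝ} (hθ : 0 < θ) : 0 < 1 - Real.exp (-θ * X.minStep) :=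
  sub_pos.2 (Real.exp_lt_one_iff.2 (by nlinarith [X.minStep_pos]))

lemma sourceBarrier_nonneg {θ : ℝ} (hθ : 0 < θ) (y : ℝ) : 0 ≤ X.sourceBarrier θ y :=
  mul_nonneg (inv_pos.2 (X.one_sub_exp_minStep_pos hθ)).le
    (by linarith [cappedExp_le_one θ (y + X.minStep)])

lemma sourceBarrier_le {θ : ℝ} (hθ : 0 < θ) (y : ℝ) :
    X.sourceBarrier θ y ≤ (1 - Real.exp (-θ * X.minStep))⁻¹ * 2 :=
  mul_le_mul_of_nonneg_left (by linarith [cappedExp_nonneg θ (y + X.minStep)])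
    (inv_pos.2 (X.one_sub_exp_minStep_pos hθ)).le

lemma exists_hasSum_sourceBarrier {θ y : ℝ} (hθ : 0 < θ) (hy : 0 ≤ y) :
    ∃ S, HasSum (fun p => X.weight p * X.sourceBarrier θ (y - X.step p)) S ∧
      S + Real.exp (-θ * y) ≤ X.sourceBarrier θ y := by
  have hκ := X.one_sub_exp_minStep_pos hθ
  have hc := X.hasSum_cappedExp θ (y + X.minStep)
  refine ⟨(1 - Real.exp (-θ * X.minStep))⁻¹ *
    (2 - ∑' p, X.weight p * cappedExp θ (y + X.minStep - X.step p)), ?_, ?_⟩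
  · refine (((X.hasSum_weight_mul_const 2).sub hc).mul_left _).congr_fun fun p => ?_
    rw [sourceBarrier, show y - X.step p + X.minStep = y + X.minStep - X.step p by ring]
    ring
  · have hexp : Real.exp (-θ * y) ≤ ∑' p, X.weight p * cappedExp θ (y + X.minStep - X.step p) :=
      X.le_hasSum_of_le hc fun p => le_min
        (Real.exp_le_one_iff.2 (by nlinarith))
        (Real.exp_le_exp.2 (by nlinarith [X.minStep_le p]))
    have hadd : Real.exp (-θ * (y + X.minStep)) =
        Real.exp (-θ * X.minStep) * Real.exp (-θ * y) := by
      rw [← Real.exp_add]; ring_nf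
    have hgap := cappedExp_le_exp θ (y + X.minStep)
    rw [sourceBarrier, ← le_sub_iff_add_le', ← mul_sub, ← div_eq_inv_mul, le_div_iff₀ hκ]
    linarith

lemma comparison {T : Set ℝ} (hT : ∀ y ∈ T, ∀ p, y - X.step p ∈ T) {K : ℝ} {f s e : ℝ → ℝ}
    (lt : ∀ y ∈ T, y < K → f y ≤ s y)
    (sub : ∀ y ∈ T, K ≤ y →
      ∃ S, HasSum (fun p => X.weight p * f (y - X.step p)) S ∧ f y ≤ S + e y)
    (super : ∀ y, K ≤ y →
      ∃ S, HasSum (fun p => X.weight p * s (y - X.step p)) S ∧ S + e y ≤ s y)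
    {y : ℝ} (hy : y ∈ T) : f y ≤ s y := by
  refine X.step_induction hT (K := K) lt (fun y hy hKy ih => ?_) hy
  obtain ⟨S, hS, hfS⟩ := sub y hy hKy
  obtain ⟨S', hS', hsS⟩ := super y hKy
  have : S ≤ S' := hasSum_le (fun p => mul_le_mul_of_nonneg_left (ih p) (X.weight_pos p).le) hS hS'
  linarith

/-- A nonnegative function that is at least `B` on `(-∞, -L)` and whose average over one step falls
short of its value at `y ≥ 0` by at least `A * e ^ (-θ * y)`. Its second source term compensates for
the jump of `cappedExp` at `-L`. -/
def barrier (θ L A B y : ℝ) : ℝ :=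
  A * X.sourceBarrier θ y + B * (X.expMoment * Real.exp (-X.rate * L) * X.sourceBarrier X.rate y +
    cappedExp X.rate (y + L))

section barrier

variable {θ L A B y : ℝ}

lemma barrier_nonneg (hθ : 0 < θ) (hA : 0 ≤ A) (hB : 0 ≤ B) : 0 ≤ X.barrier θ L A B y := by
  have := X.sourceBarrier_nonneg hθ y
  have := X.sourceBarrier_nonneg X.rate_pos y
  have := X.expMoment_nonneg
  have := cappedExp_nonneg X.rate (y + L)
  unfold barrier
  positivity

lemma le_barrier (hθ : 0 < θ) (hA : 0 ≤ A) (hB : 0 ≤ B) (hy : y ≤ -L) :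
    B ≤ X.barrier θ L A B y := by
  have := X.sourceBarrier_nonneg hθ y
  have := X.sourceBarrier_nonneg X.rate_pos y
  have := X.expMoment_nonneg
  rw [barrier, cappedExp_eq_one X.rate_pos.le (by linarith), mul_add, mul_one, ← add_assoc]
  exact le_add_of_nonneg_left (by positivity)

lemma exists_hasSum_barrier (hθ : 0 < θ) (hA : 0 ≤ A) (hB : 0 ≤ B) (hy : 0 ≤ y) :
    ∃ S, HasSum (fun p => X.weight p * X.barrier θ L A B (y - X.step p)) S ∧
      S + A * Real.exp (-θ * y) ≤ X.barrier θ L A B y := by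
  obtain ⟨S₁, hS₁, hle₁⟩ := X.exists_hasSum_sourceBarrier hθ hy
  obtain ⟨S₂, hS₂, hle₂⟩ := X.exists_hasSum_sourceBarrier X.rate_pos hy
  refine ⟨_, ((hS₁.mul_left A).add (((hS₂.mul_left (X.expMoment * Real.exp (-X.rate * L))).add
    (X.hasSum_cappedExp X.rate (y + L))).mul_left B)).congr_fun fun p => ?_, ?_⟩
  · rw [barrier, sub_add_eq_add_sub]
    ring
  · have hcap := X.tsum_cappedExp_le (y + L)
    rw [mul_add, Real.exp_add] at hcap
    have hK := mul_le_mul_of_nonneg_left hle₂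
      (mul_nonneg X.expMoment_nonneg (Real.exp_pos (-X.rate * L)).le)
    have hBK := mul_le_mul_of_nonneg_left (add_le_add hK hcap) hB
    have hA' := mul_le_mul_of_nonneg_left hle₁ hA
    have hB' := mul_nonneg hB (cappedExp_nonneg X.rate (y + L))
    unfold barrier
    linarith

lemma exists_barrier_le (hθ : 0 < θ) :
    ∃ C > 0, ∀ {L A B y : ℝ}, 0 ≤ A → 0 ≤ B → 0 ≤ y →
      X.barrier θ L A B y ≤ C * (A + B * Real.exp (-X.rate * L)) := by
  have hκ : ∀ {θ}, 0 < θ → 0 < (1 - Real.exp (-θ * X.minStep))⁻¹ * 2 := fun hθ =>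
    mul_pos (inv_pos.2 (X.one_sub_exp_minStep_pos hθ)) two_pos
  set κ₁ := (1 - Real.exp (-θ * X.minStep))⁻¹ * 2
  set κ₂ := (1 - Real.exp (-X.rate * X.minStep))⁻¹ * 2
  have hκ₁ : 0 < κ₁ := hκ hθ
  have hκ₂ : 0 < κ₂ := hκ X.rate_pos
  have hM := X.expMoment_nonneg
  refine ⟨κ₁ + X.expMoment * κ₂ + 1, by positivity, fun {L A B y} hA hB hy => ?_⟩
  have hcap : cappedExp X.rate (y + L) ≤ Real.exp (-X.rate * L) :=
    (cappedExp_le_exp _ _).trans (Real.exp_le_exp.2 (by nlinarith [X.rate_pos]))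
  calc X.barrier θ L A B y
      ≤ A * κ₁ + B * (X.expMoment * Real.exp (-X.rate * L) * κ₂ + Real.exp (-X.rate * L)) := by
        unfold barrier
        gcongr
        exacts [X.sourceBarrier_le hθ y, X.sourceBarrier_le X.rate_pos y]
    _ ≤ A * (κ₁ + X.expMoment * κ₂ + 1) +
          B * Real.exp (-X.rate * L) * (κ₁ + X.expMoment * κ₂ + 1) := by
        rw [show B * (X.expMoment * Real.exp (-X.rate * L) * κ₂ + Real.exp (-X.rate * L)) =
          B * Real.exp (-X.rate * L) * (X.expMoment * κ₂ + 1) by ring]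
        gcongr <;> linarith [mul_nonneg hM hκ₂.le]
    _ = _ := by ring

end barrier

lemma exists_maximum_principle {θ : ℝ} (hθ : 0 < θ) :
    ∃ C > 0, ∀ {T : Set ℝ}, (∀ y ∈ T, ∀ p, y - X.step p ∈ T) →
      ∀ {f : ℝ → ℝ} {K L A B : ℝ}, 0 ≤ A → 0 ≤ B →
      (∀ y ∈ T, y < K - L → f y ≤ B) → (∀ y ∈ T, K - L ≤ y → y < K → f y ≤ 0) →
      (∀ y ∈ T, K ≤ y → ∃ S, HasSum (fun p => X.weight p * f (y - X.step p)) S ∧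
        f y ≤ S + A * Real.exp (-θ * (y - K))) →
      ∀ y ∈ T, K ≤ y → f y ≤ C * (A + B * Real.exp (-X.rate * L)) := by
  obtain ⟨C, hC, hbarrier⟩ := X.exists_barrier_le hθ
  refine ⟨C, hC, fun {T} hT f K L A B hA hB far near sub y hy hKy => ?_⟩
  have hf : f y ≤ X.barrier θ L A B (y - K) := by
    refine X.comparison hT (K := K) (s := fun y => X.barrier θ L A B (y - K))
      (fun y hy hyK => ?_) sub (fun y hKy => ?_) hy
    · obtain hyL | hyL := lt_or_ge y (K - L)
      · exact (far y hy hyL).trans (X.le_barrier hθ hA hB (by linarith))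
      · exact (near y hy hyL hyK).trans (X.barrier_nonneg hθ hA hB)
    · simpa only [sub_right_comm] using X.exists_hasSum_barrier hθ hA hB (sub_nonneg.2 hKy)
  exact hf.trans (hbarrier hA hB (sub_nonneg.2 hKy))

lemma exists_abs_maximum_principle {θ : ℝ} (hθ : 0 < θ) :
    ∃ C > 0, ∀ {T : Set ℝ}, (∀ y ∈ T, ∀ p, y - X.step p ∈ T) →
      ∀ {f : ℝ → ℝ} {K L A B ε : ℝ}, 0 ≤ A → 0 ≤ B → 0 ≤ ε →
      (∀ y, |f y| ≤ B) → (∀ y ∈ T, K - L ≤ y → y < K → |f y| ≤ ε) →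
      (∀ y ∈ T, K ≤ y → ∃ S, HasSum (fun p => X.weight p * f (y - X.step p)) S ∧
        |f y - S| ≤ A * Real.exp (-θ * (y - K))) →
      ∀ y ∈ T, K ≤ y → |f y| ≤ ε + C * (A + B * Real.exp (-X.rate * L)) := by
  obtain ⟨C, hC, hmax⟩ := X.exists_maximum_principle hθ
  refine ⟨C, hC, fun {T} hT f K L A B ε hA hB hε far near harm y hy hKy => abs_le'.2 ⟨?_, ?_⟩⟩
  · rw [← sub_le_iff_le_add']
    refine hmax hT (f := fun y => f y - ε) hA hB (fun y _ _ => ?_) (fun y hy hyL hyK => ?_)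
      (fun y hy hKy => ?_) y hy hKy
    · linarith [le_of_abs_le (far y)]
    · linarith [le_of_abs_le (near y hy hyL hyK)]
    · obtain ⟨S, hS, hle⟩ := harm y hy hKy
      refine ⟨S - ε, ?_, by linarith [le_of_abs_le hle]⟩
      simpa only [mul_sub] using hS.sub (X.hasSum_weight_mul_const ε)
  · rw [← sub_le_iff_le_add']
    refine hmax hT (f := fun y => -f y - ε) hA hB (fun y _ _ => ?_) (fun y hy hyL hyK => ?_)
      (fun y hy hKy => ?_) y hy hKy
    · linarith [neg_le_of_abs_le (far y)]
    · linarith [neg_le_of_abs_le (near y hy hyL hyK)]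
    · obtain ⟨S, hS, hle⟩ := harm y hy hKy
      refine ⟨-S - ε, ?_, by linarith [neg_le_of_abs_le hle]⟩
      simpa only [mul_sub, mul_neg] using hS.neg.sub (X.hasSum_weight_mul_const ε)

/-! ### Asymptotically harmonic functions -/

lemma tendsto_sub_step_of_tendsto_max {D : ℝ → ℝ} {C : ℝ} (hD : ∀ y, |D y| ≤ C)
    (harm : Tendsto (fun y => D y - ∑' q, X.weight q * D (y - X.step q)) atTop (𝓝 0))
    {s : ℝ} (hmax : Tendsto (fun y => max (D y - s) 0) atTop (𝓝 0))
    {F : Filter ℝ} (hF : F ≤ atTop) (hDF : Tendsto D F (𝓝 s)) (p : ι) :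
    Tendsto (fun y => D (y - X.step p)) F (𝓝 s) := by
  have hshift (q : ι) : Tendsto (fun y => y - X.step q) F atTop :=
    (tendsto_atTop_add_const_right _ (-X.step q) tendsto_id).mono_left hF
  set g : ℝ → ℝ := fun y => max (D y - s) 0
  have hg0 (y : ℝ) : 0 ≤ g y := le_max_right _ _
  have hgC (y : ℝ) : |g y| ≤ C + |s| := by
    rw [abs_of_nonneg (hg0 y)]
    refine max_le ?_ (add_nonneg ((abs_nonneg _).trans (hD y)) (abs_nonneg s))
    linarith [le_of_abs_le (hD y), neg_abs_le s]
  have hgsum (y : ℝ) : Summable fun q => X.weight q * g (y - X.step q) :=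
    X.summable_weight_mul fun q => hgC _
  have hDsum (y : ℝ) : Summable fun q => X.weight q * D (y - X.step q) :=
    X.summable_weight_mul fun q => hD _
  have havg : Tendsto (fun y => ∑' q, X.weight q * g (y - X.step q)) F (𝓝 0) := by
    have := tendsto_tsum_of_dominated_convergence (𝓕 := F)
      (X.hasSum_weight.summable.mul_right (C + |s|))
      (fun q => (hmax.comp (hshift q)).const_mul (X.weight q)) (.of_forall fun y q => ?_)
    · simpa using this
    · rw [norm_mul, Real.norm_of_nonneg (X.weight_pos q).le]
      exact mul_le_mul_of_nonneg_left (hgC _) (X.weight_pos q).le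
  have hnonneg (y : ℝ) : 0 ≤ s - D y + g y := by linarith [le_max_left (D y - s) 0]
  have hterm (y : ℝ) : X.weight p * (s - D (y - X.step p) + g (y - X.step p)) ≤
      s - ∑' q, X.weight q * D (y - X.step q) + ∑' q, X.weight q * g (y - X.step q) := by
    have hsum := ((X.hasSum_weight_mul_const s).sub (hDsum y).hasSum).add (hgsum y).hasSum
    simp only [← mul_add, ← mul_sub] at hsum
    exact le_hasSum hsum p fun q _ => mul_nonneg (X.weight_pos q).le (hnonneg _)
  have htotal : Tendsto (fun y => s - ∑' q, X.weight q * D (y - X.step q) +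
      ∑' q, X.weight q * g (y - X.step q)) F (𝓝 0) := by
    simpa using ((hDF.const_sub s).add (harm.mono_left hF)).add havg
  have hgp : Tendsto (fun y => g (y - X.step p)) F (𝓝 0) := hmax.comp (hshift p)
  have hzero : Tendsto (fun y => s - D (y - X.step p) + g (y - X.step p)) F (𝓝 0) := by
    have := squeeze_zero (fun y => mul_nonneg (X.weight_pos p).le (hnonneg _)) hterm htotal
    simpa [(X.weight_pos p).ne'] using this.const_mul (X.weight p)⁻¹
  simpa using (hgp.const_add s).sub hzero

lemma tendsto_sub_nat_mul_step_of_tendsto_max {D : ℝ → ℝ} {C : ℝ} (hD : ∀ y, |D y| ≤ C)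
    (harm : Tendsto (fun y => D y - ∑' q, X.weight q * D (y - X.step q)) atTop (𝓝 0))
    {s : ℝ} (hmax : Tendsto (fun y => max (D y - s) 0) atTop (𝓝 0))
    {F : Filter ℝ} (hF : F ≤ atTop) (hDF : Tendsto D F (𝓝 s)) (p : ι) (k : ℕ) :
    Tendsto (fun y => D (y - k * X.step p)) F (𝓝 s) := by
  induction k with
  | zero => simpa using hDF
  | succ k ih =>
    have hF' : F.map (fun y => y - k * X.step p) ≤ atTop :=
      (tendsto_atTop_add_const_right _ (-(k * X.step p)) tendsto_id).mono_left hF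
    have := X.tendsto_sub_step_of_tendsto_max hD harm hmax hF' (tendsto_map'_iff.2 ih) p
    refine (tendsto_map'_iff.1 this).congr fun y => ?_
    simp only [Function.comp_apply, Nat.cast_succ, add_one_mul, sub_sub]

/-- The Choquet–Deny argument: where the increment `D` of `f` nears its limit superior `s`, so do
its backward shifts by any number of steps; they telescope, and `f` is bounded, so `s ≤ 0`. -/
lemma tendsto_max_sub_sub_step {f : ℝ → ℝ} {C : ℝ} (hf : ∀ y, |f y| ≤ C)
    (harm : Tendsto (fun y => f y - ∑' q, X.weight q * f (y - X.step q)) atTop (𝓝 0)) (p : ι) :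
    Tendsto (fun y => max (f y - f (y - X.step p)) 0) atTop (𝓝 0) := by
  set D : ℝ → ℝ := fun y => f y - f (y - X.step p) with hDdef
  have hD (y : ℝ) : |D y| ≤ C + C := (abs_sub _ _).trans (add_le_add (hf _) (hf _))
  have hDharm : Tendsto (fun y => D y - ∑' q, X.weight q * D (y - X.step q)) atTop (𝓝 0) := by
    have hshift := harm.comp (tendsto_atTop_add_const_right _ (-X.step p) tendsto_id)
    simpa using (harm.sub hshift).congr fun y => by
      have hsum (y : ℝ) := X.summable_weight_mul (fun q => hf (y - X.step q))
      simp only [hDdef, mul_sub, Function.comp_apply, id, ← sub_eq_add_neg,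
        sub_right_comm _ (X.step _) (X.step p), (hsum y).tsum_sub (hsum (y - X.step p))]
      ring
  obtain ⟨s, hmax, F, hF, _, hDF⟩ := exists_tendsto_max_sub_of_abs_le hD
  have hs : s ≤ 0 := by
    by_contra! hs
    obtain ⟨n, hn⟩ := exists_nat_gt ((C + C) / s)
    rw [div_lt_iff₀ hs] at hn
    have hsum : Tendsto (fun y => ∑ k ∈ Finset.range n, D (y - k * X.step p)) F (𝓝 (n * s)) := by
      simpa using tendsto_finsetSum (Finset.range n) fun k _ =>
        X.tendsto_sub_nat_mul_step_of_tendsto_max hD hDharm hmax hF hDF p k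
    refine hn.not_ge (le_of_tendsto hsum (.of_forall fun y => ?_))
    have htelescope (n : ℕ) :
        ∑ k ∈ Finset.range n, D (y - k * X.step p) = f y - f (y - n * X.step p) := by
      have := Finset.sum_range_sub' (fun k : ℕ => f (y - k * X.step p)) n
      simpa [hDdef, add_one_mul, sub_sub] using this
    rw [htelescope]
    linarith [le_of_abs_le (hf y), neg_le_of_abs_le (hf (y - n * X.step p))]
  exact squeeze_zero (fun y => le_max_right _ _)
    (fun y => max_le_max_right 0 (by linarith)) hmax

theorem tendsto_sub_sub_step {f : ℝ → ℝ} {C : ℝ} (hf : ∀ y, |f y| ≤ C)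
    (harm : Tendsto (fun y => f y - ∑' q, X.weight q * f (y - X.step q)) atTop (𝓝 0)) (p : ι) :
    Tendsto (fun y => f y - f (y - X.step p)) atTop (𝓝 0) := by
  have hpos := X.tendsto_max_sub_sub_step hf harm p
  have hneg := X.tendsto_max_sub_sub_step (f := fun y => -f y) (C := C) (by simpa using hf) ?_ p
  · have hadd := hpos.add hneg
    rw [add_zero] at hadd
    refine (tendsto_zero_iff_abs_tendsto_zero _).2 (hadd.congr fun y => ?_)
    rw [Function.comp_apply, ← max_zero_add_max_neg_zero_eq_abs_self, neg_sub_neg, neg_sub]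
  · simpa using harm.neg.congr fun y => by
      simp only [tsum_neg]
      ring

/-! ### Renewal functions -/

/-- `h y` is the tilted renewal function `∑ₘ E e ^ (-ρ * (y - Sₘ)) 1_{Sₘ ≤ y}` of the random walk
`Sₘ` with step law `X`, characterized by its renewal equation. -/
structure IsRenewalFunction (ρ : ℝ) (h : ℝ → ℝ) : Prop where
  eq_zero : ∀ y < 0, h y = 0
  hasSum : ∀ y, 0 ≤ y →
    HasSum (fun p => X.weight p * h (y - X.step p)) (h y - Real.exp (-ρ * y))

/-- The group generated by the possible steps. -/
def stepGroup : AddSubgroup ℝ := AddSubgroup.closure (range X.step)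

lemma step_mem_stepGroup (p : ι) : X.step p ∈ X.stepGroup :=
  AddSubgroup.subset_closure (mem_range_self p)

lemma sub_step_sub_mem_stepGroup {y z : ℝ} (hyz : y - z ∈ X.stepGroup) (p : ι) :
    y - X.step p - z ∈ X.stepGroup := by
  rw [sub_right_comm]
  exact X.stepGroup.sub_mem hyz (X.step_mem_stepGroup p)

lemma exists_sub_mem_stepGroup (p : ι) (K y : ℝ) :
    ∃ z ∈ Ico K (K + X.step p), y - z ∈ X.stepGroup := by
  obtain ⟨m, hm, -⟩ := existsUnique_sub_zsmul_mem_Ico (X.step_pos p) y K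
  refine ⟨_, hm, ?_⟩
  rw [sub_sub_cancel]
  exact X.stepGroup.zsmul_mem (X.step_mem_stepGroup p) m

namespace IsRenewalFunction

variable {X} {ρ : ℝ} {h : ℝ → ℝ} (hh : X.IsRenewalFunction ρ h)

include hh

lemma nonneg (y : ℝ) : 0 ≤ h y := by
  refine X.step_induction (T := univ) (K := 0) (motive := fun y => 0 ≤ h y) (fun _ _ _ => trivial)
    (fun y _ hy => (hh.eq_zero y hy).ge) (fun y _ hy ih => ?_) (mem_univ y)
  linarith [X.le_hasSum_of_le (hh.hasSum y hy) ih, Real.exp_pos (-ρ * y)]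

lemma div_mul_apply_nonneg {m : ℝ} (hm : 0 ≤ m) (y : ℝ) : 0 ≤ y / m * h y := by
  obtain hy | hy := lt_or_ge y 0
  · rw [hh.eq_zero y hy, mul_zero]
  · exact mul_nonneg (div_nonneg hy hm) (hh.nonneg y)

lemma exp_le {y : ℝ} (hy : 0 ≤ y) : Real.exp (-ρ * y) ≤ h y :=
  sub_nonneg.1 (X.le_hasSum_of_le (hh.hasSum y hy) fun _ => hh.nonneg _)

lemma le_exp_mul {x y : ℝ} (hxy : x ≤ y) : h x ≤ Real.exp (ρ * (y - x)) * h y := by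
  obtain ⟨d, rfl⟩ : ∃ d, y = x + d := ⟨y - x, by ring⟩
  rw [le_add_iff_nonneg_right] at hxy
  rw [add_sub_cancel_left]
  refine X.step_induction (T := univ) (K := 0)
    (motive := fun x => h x ≤ Real.exp (ρ * d) * h (x + d)) (fun _ _ _ => trivial)
    (fun x _ hx => ?_) (fun x _ hx ih => ?_) (mem_univ x)
  · exact (hh.eq_zero x hx).trans_le (mul_nonneg (Real.exp_pos _).le (hh.nonneg _))
  · have hsum : h x - Real.exp (-ρ * x) ≤
        Real.exp (ρ * d) * (h (x + d) - Real.exp (-ρ * (x + d))) := by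
      refine hasSum_le (fun p => ?_) (hh.hasSum x hx)
        ((hh.hasSum (x + d) (by linarith)).mul_left (Real.exp (ρ * d)))
      rw [mul_left_comm, add_sub_right_comm]
      exact mul_le_mul_of_nonneg_left (ih p) (X.weight_pos p).le
    have hexp : Real.exp (ρ * d) * Real.exp (-ρ * (x + d)) = Real.exp (-ρ * x) := by
      rw [← Real.exp_add]; ring_nf
    linarith

lemma exists_le (hρ : 0 < ρ) : ∃ C, ∀ y, h y ≤ C := by
  obtain ⟨C, hC, hmax⟩ := X.exists_maximum_principle hρ
  refine ⟨C, fun y => ?_⟩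
  obtain hy | hy := lt_or_ge y 0
  · exact (hh.eq_zero y hy).trans_le hC.le
  · have := hmax (T := univ) (fun _ _ _ => trivial) (f := h) (K := 0) (L := 0) zero_le_one le_rfl
      (fun y _ hy => (hh.eq_zero y (by simpa using hy)).le)
      (fun y _ _ hy => (hh.eq_zero y hy).le)
      (fun y _ hy => ⟨_, hh.hasSum y hy, by simp⟩) y trivial hy
    simpa using this

lemma exists_pos_le (hρ : 0 < ρ) : ∃ c > 0, ∀ᶠ y in atTop, c ≤ h y := by
  obtain ⟨C, _, hmax⟩ := X.exists_maximum_principle X.rate_pos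
  obtain ⟨L, hCL, hL⟩ := (((tendsto_mul_exp_neg_mul_atTop C X.rate_pos).eventually_le_const
    one_half_pos).and (eventually_ge_atTop 0)).exists
  set B := Real.exp (-ρ * L)
  have hB : 0 < B := Real.exp_pos _
  refine ⟨B / 2, by positivity, ?_⟩
  filter_upwards [eventually_ge_atTop L] with y hy
  have hmax := hmax (T := univ) (fun _ _ _ => trivial) (f := fun y => B - h y) (K := L) (L := L)
    le_rfl hB.le (fun y _ _ => by linarith [hh.nonneg y]) (fun y _ hy hyL => ?_)
    (fun y _ hy => ⟨B - (h y - Real.exp (-ρ * y)), ?_, ?_⟩) y trivial hy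
  · nlinarith
  · have : B ≤ Real.exp (-ρ * y) := Real.exp_le_exp.2 (by nlinarith)
    linarith [hh.exp_le (y := y) (by linarith)]
  · simpa only [mul_sub] using
      (X.hasSum_weight_mul_const B).sub (hh.hasSum y (hL.trans hy))
  · linarith [Real.exp_pos (-ρ * y)]

lemma tendsto_sub_sub_step (hρ : 0 < ρ) (p : ι) :
    Tendsto (fun y => h y - h (y - X.step p)) atTop (𝓝 0) := by
  obtain ⟨C, hC⟩ := hh.exists_le hρ
  refine X.tendsto_sub_sub_step (fun y => (abs_of_nonneg (hh.nonneg y)).trans_le (hC y)) ?_ p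
  refine (tendsto_mul_exp_neg_mul_atTop 1 hρ).congr' ?_
  filter_upwards [eventually_ge_atTop 0] with y hy
  rw [(hh.hasSum y hy).tsum_eq]
  ring

lemma tendsto_sub_sub (hρ : 0 < ρ) {s : ℝ} (hs : s ∈ X.stepGroup) :
    Tendsto (fun y => h y - h (y - s)) atTop (𝓝 0) := by
  have hshift (a : ℝ) : Tendsto (fun y : ℝ => y - a) atTop atTop :=
    tendsto_atTop_add_const_right _ (-a) tendsto_id
  induction hs using AddSubgroup.closure_induction with
  | mem s hs =>
    obtain ⟨p, rfl⟩ := hs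
    exact hh.tendsto_sub_sub_step hρ p
  | zero => simp
  | add a b _ _ ha hb => simpa [sub_sub] using ha.add (hb.comp (hshift a))
  | neg a _ ha => simpa using (ha.comp (hshift (-a))).neg

lemma exists_pos_le_add (hρ : 0 < ρ) {ε : ℝ} (hε : 0 < ε) :
    ∃ δ > 0, ∀ x y, x ≤ y → y ≤ x + δ → h x ≤ h y + ε := by
  obtain ⟨C, hC⟩ := hh.exists_le hρ
  have hC0 : 0 ≤ C := (hh.nonneg 0).trans (hC 0)
  have hη : 0 < ε / (C + 1) := by positivity
  refine ⟨Real.log (1 + ε / (C + 1)) / ρ, div_pos (Real.log_pos (by linarith)) hρ,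
    fun x y hxy hyx => ?_⟩
  have hexp : Real.exp (ρ * (y - x)) ≤ 1 + ε / (C + 1) := by
    rw [← sub_le_iff_le_add', le_div_iff₀' hρ] at hyx
    exact (Real.exp_le_exp.2 hyx).trans_eq (Real.exp_log (by linarith))
  calc h x ≤ Real.exp (ρ * (y - x)) * h y := hh.le_exp_mul hxy
    _ ≤ (1 + ε / (C + 1)) * h y := mul_le_mul_of_nonneg_right hexp (hh.nonneg y)
    _ = h y + ε / (C + 1) * h y := by ring
    _ ≤ h y + ε / (C + 1) * (C + 1) := by
      gcongr
      linarith [hC y]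
    _ = h y + ε := by rw [div_mul_cancel₀ _ (by positivity)]

lemma eventually_abs_sub_sub_le (hρ : 0 < ρ) {ε : ℝ} (hε : 0 < ε) (L : ℝ) :
    ∀ᶠ y in atTop, ∀ s ∈ X.stepGroup, |s| ≤ L → |h y - h (y - s)| ≤ ε := by
  obtain ⟨δ, hδ, hreg⟩ := hh.exists_pos_le_add hρ (half_pos hε)
  obtain ⟨F, hFH, hF⟩ := exists_finset_bracketing X.stepGroup hδ L
  have hnear : ∀ᶠ y in atTop, ∀ a ∈ F, |h y - h (y - a)| ≤ ε / 2 :=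
    (F.eventually_all).2 fun a ha =>
      (tendsto_zero_iff_abs_tendsto_zero _).1 (hh.tendsto_sub_sub hρ (hFH a ha))
        |>.eventually_le_const (half_pos hε)
  filter_upwards [hnear] with y hy s hs hsL
  obtain ⟨a, ha, b, hb, has, hsb, hba⟩ := hF s hs hsL
  have hlower := hreg (y - b) (y - s) (by linarith) (by linarith)
  have hupper := hreg (y - s) (y - a) (by linarith) (by linarith)
  rw [abs_le]
  constructor <;> linarith [abs_le.1 (hy a ha), abs_le.1 (hy b hb)]

lemma exists_abs_sub_le (hρ : 0 < ρ) {ε : ℝ} (hε : 0 < ε) :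
    ∃ K, ∀ y y', K ≤ y → K ≤ y' → y - y' ∈ X.stepGroup → |h y - h y'| ≤ ε := by
  obtain ⟨p⟩ : Nonempty ι := X.nonempty
  obtain ⟨C, hC⟩ := hh.exists_le hρ
  obtain ⟨M, hM, hmax⟩ := X.exists_abs_maximum_principle hρ
  obtain ⟨L, hL, hpL⟩ := (((tendsto_mul_exp_neg_mul_atTop (M * C) X.rate_pos).eventually_le_const
    (by positivity : 0 < ε / 8)).and (eventually_ge_atTop (X.step p))).exists
  have hL0 := (X.step_pos p).le.trans hpL
  obtain ⟨K, hK, hK0, hnear⟩ := (((tendsto_mul_exp_neg_mul_atTop M hρ).eventually_le_const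
    (by positivity : 0 < ε / 8)).and ((eventually_ge_atTop 0).and (eventually_forall_ge_atTop.2
    (hh.eventually_abs_sub_sub_le hρ (by positivity : 0 < ε / 4) L)))).exists
  refine ⟨K + L, fun y y' hy hy' hyy' => ?_⟩
  obtain ⟨z, ⟨hzK, hzL⟩, hmz⟩ := X.exists_sub_mem_stepGroup p K y'
  have hcompare : ∀ y ∈ {y | y - z ∈ X.stepGroup}, K + L ≤ y → |h y - h z| ≤
      ε / 4 + M * (Real.exp (-ρ * (K + L)) + C * Real.exp (-X.rate * L)) := by
    refine hmax (fun y => X.sub_step_sub_mem_stepGroup) (Real.exp_pos _).le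
      ((hh.nonneg 0).trans (hC 0)) (by positivity)
      (fun y => ?_) (fun y hy hKy hyK => ?_) (fun y _ hy =>
      ⟨_, by simpa only [mul_sub] using
        (hh.hasSum y (by linarith)).sub (X.hasSum_weight_mul_const (h z)), ?_⟩)
    · rw [abs_le]
      constructor <;> linarith [hh.nonneg y, hh.nonneg z, hC y, hC z]
    · simpa using hnear y (by linarith) (y - z) hy (abs_le.2 ⟨by linarith, by linarith⟩)
    · rw [← Real.exp_add, sub_sub_sub_cancel_right, sub_sub_cancel, Real.abs_exp]
      exact Real.exp_le_exp.2 (by linarith)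
  have hsource : M * Real.exp (-ρ * (K + L)) ≤ M * Real.exp (-ρ * K) := by
    gcongr ?_ * Real.exp ?_
    nlinarith
  have h₁ := abs_le.1 (hcompare y (by simpa using X.stepGroup.add_mem hyy' hmz) hy)
  have h₂ := abs_le.1 (hcompare y' hmz hy')
  rw [abs_le]
  constructor <;> linarith

end IsRenewalFunction

/-! ### The covariance estimate -/

lemma two_mul_le_of_hasSum {ξ x : ι → ℝ} {V m Q ψ : ℝ} (hξ : HasSum (fun p => X.weight p * ξ p) 0)
    (hV : HasSum (fun p => X.weight p * ξ p ^ 2) V) (hx : HasSum (fun p => X.weight p * x p) m)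
    (hQ : HasSum (fun p => X.weight p * x p ^ 2) Q)
    (hψ : HasSum (fun p => X.weight p * (ξ p * x p)) ψ) {α : ℝ} (hα : 0 < α) (t : ℝ) :
    2 * ψ ≤ α * V + (Q - 2 * t * m + t ^ 2) / α := by
  have amgm (a b : ℝ) : 2 * (a * b) ≤ α * a ^ 2 + b ^ 2 / α := by
    have : α * a ^ 2 + b ^ 2 / α - 2 * (a * b) = (α * a - b) ^ 2 / α := by
      field_simp
      ring
    linarith [div_nonneg (sq_nonneg (α * a - b)) hα.le]
  have hleft := (hψ.mul_left 2).sub (hξ.mul_left (2 * t))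
  have hright := (hV.mul_left α).add
    (((hQ.sub (hx.mul_left (2 * t))).add (X.hasSum_weight_mul_const (t ^ 2))).div_const α)
  rw [mul_zero, sub_zero] at hleft
  refine hasSum_le (fun p => ?_) hleft hright
  calc 2 * (X.weight p * (ξ p * x p)) - 2 * t * (X.weight p * ξ p)
      = X.weight p * (2 * (ξ p * (x p - t))) := by ring
    _ ≤ X.weight p * (α * ξ p ^ 2 + (x p - t) ^ 2 / α) :=
      mul_le_mul_of_nonneg_left (amgm _ _) (X.weight_pos p).le
    _ = _ := by ring

variable {X} in
lemma IsRenewalFunction.exists_hasSum_covariance {ρ : ℝ} {h : ℝ → ℝ}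
    (hh : X.IsRenewalFunction ρ h) {ξ : ι → ℝ} {V : ℝ} (hξ : HasSum (fun p => X.weight p * ξ p) 0)
    (hV : HasSum (fun p => X.weight p * ξ p ^ 2) V) {C : ℝ} (hC : ∀ y, h y ≤ C) {c : ℝ}
    (hc : c ∈ Icc 0 C) {α : ℝ} (hα : 0 < α) {y : ℝ} (hy : 0 ≤ y) :
    ∃ ψ Q, HasSum (fun p => X.weight p * (ξ p * h (y - X.step p))) ψ ∧
      HasSum (fun p => X.weight p * (h (y - X.step p) - c) ^ 2) Q ∧
      2 * ψ + (h y - c) ^ 2 / α ≤ α * V + Q / α + 2 * C / α * Real.exp (-ρ * y) := by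
  have hgC (y : ℝ) : |h y - c| ≤ C :=
    abs_le.2 ⟨by linarith [hh.nonneg y, hc.2], by linarith [hC y, hc.1]⟩
  have hψ : Summable fun p => X.weight p * (ξ p * (h (y - X.step p) - c)) := by
    refine .of_norm_bounded ((X.summable_weight_mul_of_sq hV.summable).mul_right C) fun p => ?_
    rw [norm_mul, norm_mul, Real.norm_of_nonneg (X.weight_pos p).le, ← mul_assoc]
    exact mul_le_mul_of_nonneg_left (hgC _) (mul_nonneg (X.weight_pos p).le (norm_nonneg _))
  have hQ : Summable fun p => X.weight p * (h (y - X.step p) - c) ^ 2 :=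
    X.summable_weight_mul (C := C ^ 2) fun p => by
      rw [abs_pow]
      exact pow_le_pow_left₀ (abs_nonneg _) (hgC _) 2
  have hx : HasSum (fun p => X.weight p * (h (y - X.step p) - c))
      (h y - Real.exp (-ρ * y) - c) := by
    simpa only [mul_sub] using (hh.hasSum y hy).sub (X.hasSum_weight_mul_const c)
  have hcov := X.two_mul_le_of_hasSum hξ hV hx hQ.hasSum hψ.hasSum hα (h y - c)
  refine ⟨∑' p, X.weight p * (ξ p * (h (y - X.step p) - c)), _, ?_, hQ.hasSum, ?_⟩
  · simpa [mul_sub, mul_assoc] using hψ.hasSum.add (hξ.mul_right c)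
  · have hexp : 2 * (h y - c) / α * Real.exp (-ρ * y) ≤ 2 * C / α * Real.exp (-ρ * y) := by
      gcongr
      exact le_of_abs_le (hgC y)
    have hexpand (Q e : ℝ) : (Q - 2 * (h y - c) * (h y - e - c) + (h y - c) ^ 2) / α =
        Q / α - (h y - c) ^ 2 / α + 2 * (h y - c) / α * e := by ring
    rw [hexpand] at hcov
    linarith

/-- `D` grows over one step by at most the covariance of `ξ` with `h`, up to an exponentially small
error. -/
structure IsCovarianceSubsolution (ξ : ι → ℝ) (h : ℝ → ℝ) (A θ : ℝ) (D : ℝ → ℝ) : Prop where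
  le_of_lt : ∀ K, ∃ C, ∀ y < K, D y ≤ C
  hasSum : ∀ y, 0 ≤ y →
    ∃ S, HasSum (fun p => X.weight p * (D (y - X.step p) + ξ p * h (y - X.step p))) S ∧
      D y ≤ S + A * Real.exp (-θ * y)

/-- The function to which the maximum principle is applied: the square absorbs the increments of
`h`, the linear term the variance `V` of `ξ`. -/
def energy (D h : ℝ → ℝ) (V α c y : ℝ) : ℝ :=
  2 * D y + (h y - c) ^ 2 / α - α * V / X.minStep * max y 0

lemma energy_le {D h : ℝ → ℝ} {V α c y E r : ℝ} (hV : 0 ≤ V) (hα : 0 < α) (hD : D y ≤ E)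
    (hr : |h y - c| ≤ r) : X.energy D h V α c y ≤ 2 * E + r ^ 2 / α := by
  have hmax := mul_nonneg (div_nonneg (mul_nonneg hα.le hV) X.minStep_pos.le) (le_max_right y 0)
  have hsq : (h y - c) ^ 2 / α ≤ r ^ 2 / α :=
    div_le_div_of_nonneg_right (sq_le_sq' (neg_le_of_abs_le hr) (le_of_abs_le hr)) hα.le
  unfold energy
  linarith

lemma two_mul_le_energy_add {D h : ℝ → ℝ} {V α c y : ℝ} (hα : 0 < α) (hy : 0 ≤ y) :
    2 * D y ≤ X.energy D h V α c y + α * V / X.minStep * y := by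
  rw [energy, max_eq_left hy]
  linarith [div_nonneg (sq_nonneg (h y - c)) hα.le]

lemma exists_hasSum_max_zero {y : ℝ} (hy : X.minStep ≤ y) :
    ∃ S, HasSum (fun p => X.weight p * max (y - X.step p) 0) S ∧ S ≤ y - X.minStep := by
  have hle (p : ι) : max (y - X.step p) 0 ≤ y - X.minStep :=
    max_le (by linarith [X.minStep_le p]) (by linarith)
  have hsum := X.summable_weight_mul fun p =>
    (abs_of_nonneg (le_max_right (y - X.step p) 0)).trans_le (hle p)
  exact ⟨_, hsum.hasSum, X.hasSum_le_of_le hsum.hasSum hle⟩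

namespace IsCovarianceSubsolution

variable {X} {ξ : ι → ℝ} {h D : ℝ → ℝ} {A ρ θ V : ℝ} (hD : X.IsCovarianceSubsolution ξ h A θ D)
  (hh : X.IsRenewalFunction ρ h) (hξ : HasSum (fun p => X.weight p * ξ p) 0)
  (hV : HasSum (fun p => X.weight p * ξ p ^ 2) V)

include hD hh hξ hV

lemma exists_hasSum_energy (hθρ : θ ≤ ρ) {C : ℝ} (hC : ∀ y, h y ≤ C) {c : ℝ} (hc : c ∈ Icc 0 C)
    {α : ℝ} (hα : 0 < α) {y : ℝ} (hy : X.minStep ≤ y) :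
    ∃ S, HasSum (fun p => X.weight p * X.energy D h V α c (y - X.step p)) S ∧
      X.energy D h V α c y ≤ S + (2 * C / α + 2 * A) * Real.exp (-θ * y) := by
  have hy0 := X.minStep_pos.le.trans hy
  obtain ⟨S, hS, hDS⟩ := hD.hasSum y hy0
  obtain ⟨m, hm, hmy⟩ := X.exists_hasSum_max_zero hy
  obtain ⟨ψ, Q, hψ, hQ, hcov⟩ := hh.exists_hasSum_covariance hξ hV hC hc hα hy0
  refine ⟨_, ((((hS.sub hψ).mul_left 2).add (hQ.div_const α)).sub
    (hm.mul_left (α * V / X.minStep))).congr_fun fun p => ?_, ?_⟩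
  · unfold energy
    ring
  · have hV0 : 0 ≤ V := hV.nonneg fun p => mul_nonneg (X.weight_pos p).le (sq_nonneg _)
    have hC0 : 0 ≤ C := hc.1.trans hc.2
    have hdrift := mul_le_mul_of_nonneg_left hmy
      (div_nonneg (mul_nonneg hα.le hV0) X.minStep_pos.le)
    rw [mul_sub, div_mul_cancel₀ _ X.minStep_pos.ne'] at hdrift
    have hexp : 2 * C / α * Real.exp (-ρ * y) ≤ 2 * C / α * Real.exp (-θ * y) := by
      gcongr
    rw [energy, max_eq_left hy0]
    linarith

lemma exists_energy_le (hθ : 0 < θ) (hθρ : θ ≤ ρ) (hA : 0 ≤ A) {C : ℝ} (hC : ∀ y, h y ≤ C) :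
    ∃ M > 0, ∀ {r K₀ L K E α : ℝ}, 0 < α → X.minStep ≤ K → 0 ≤ L → K₀ + L ≤ K →
      (∀ y y', K₀ ≤ y → K₀ ≤ y' → y - y' ∈ X.stepGroup → |h y - h y'| ≤ r) →
      (∀ y < K, D y ≤ E) → ∀ z ≥ K, X.energy D h V α (h z) z ≤ 2 * E + r ^ 2 / α +
        M * ((2 * C / α + 2 * A) * Real.exp (-θ * K) + C ^ 2 / α * Real.exp (-X.rate * L)) := by
  have hV0 : 0 ≤ V := hV.nonneg fun p => mul_nonneg (X.weight_pos p).le (sq_nonneg _)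
  have hC0 : 0 ≤ C := (hh.nonneg 0).trans (hC 0)
  obtain ⟨M, hM, hmax⟩ := X.exists_maximum_principle hθ
  refine ⟨M, hM, fun {r K₀ L K E α} hα hKmin hL hKL hcoset hE z hz => ?_⟩
  rw [← sub_le_iff_le_add']
  refine hmax (T := {y | y - z ∈ X.stepGroup}) (fun y => X.sub_step_sub_mem_stepGroup)
    (f := fun y => X.energy D h V α (h z) y - (2 * E + r ^ 2 / α)) (by positivity) (by positivity)
    (fun y _ hy => ?far) (fun y hyz hy hyK => ?near) (fun y _ hy => ?source) z
    (by simp [zero_mem]) hz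
  case far =>
    have hfar := X.energy_le (c := h z) hV0 hα (hE y (by linarith)) (r := C)
      (abs_le.2 ⟨by linarith [hh.nonneg y, hC z], by linarith [hC y, hh.nonneg z]⟩)
    linarith [div_nonneg (sq_nonneg r) hα.le]
  case near =>
    exact sub_nonpos.2
      (X.energy_le hV0 hα (hE y hyK) (hcoset y z (by linarith) (by linarith) hyz))
  case source =>
    obtain ⟨S, hS, hle⟩ := hD.exists_hasSum_energy hh hξ hV hθρ hC ⟨hh.nonneg z, hC z⟩ hα
      (hKmin.trans hy)
    refine ⟨S - (2 * E + r ^ 2 / α), by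
      simpa only [mul_sub] using hS.sub (X.hasSum_weight_mul_const _), ?_⟩
    rw [mul_assoc, ← Real.exp_add, show -θ * K + -θ * (y - K) = -θ * y by ring]
    linarith

lemma exists_two_mul_le (hθ : 0 < θ) (hθρ : θ ≤ ρ) (hA : 0 ≤ A) {δ : ℝ} (hδ : 0 < δ) :
    ∃ K, ∀ α > 0, ∀ y ≥ K, 2 * D y ≤ K + α * V / X.minStep * y + 3 * δ / α := by
  have hρ := hθ.trans_le hθρ
  obtain ⟨C, hC⟩ := hh.exists_le hρ
  obtain ⟨M, hM, henergy⟩ := hD.exists_energy_le hh hξ hV hθ hθρ hA hC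
  obtain ⟨K₀, hcoset⟩ := hh.exists_abs_sub_le hρ (Real.sqrt_pos.2 hδ)
  obtain ⟨L, hCL, hL⟩ := (((tendsto_mul_exp_neg_mul_atTop (M * C ^ 2)
    X.rate_pos).eventually_le_const hδ).and (eventually_ge_atTop 0)).exists
  obtain ⟨K, hCK, hKmin, hKL⟩ := (((tendsto_mul_exp_neg_mul_atTop (M * (2 * C))
    hθ).eventually_le_const hδ).and ((eventually_ge_atTop X.minStep).and
      (eventually_ge_atTop (K₀ + L)))).exists
  have hK0 := X.minStep_pos.le.trans hKmin
  obtain ⟨E, hE⟩ := hD.le_of_lt K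
  refine ⟨max K (2 * E + M * (2 * A)), fun α hα z hz => ?_⟩
  have hKz := (le_max_left _ _).trans hz
  have hz := henergy hα hKmin hL hKL hcoset hE z hKz
  rw [Real.sq_sqrt hδ.le] at hz
  calc 2 * D z ≤ X.energy D h V α (h z) z + α * V / X.minStep * z :=
        X.two_mul_le_energy_add hα (hK0.trans hKz)
    _ ≤ 2 * E + δ / α + M * ((2 * C / α + 2 * A) * Real.exp (-θ * K) +
          C ^ 2 / α * Real.exp (-X.rate * L)) + α * V / X.minStep * z := by gcongr
    _ = 2 * E + M * (2 * A) * Real.exp (-θ * K) + α * V / X.minStep * z +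
          (δ + M * (2 * C) * Real.exp (-θ * K) + M * C ^ 2 * Real.exp (-X.rate * L)) / α := by ring
    _ ≤ 2 * E + M * (2 * A) * 1 + α * V / X.minStep * z + (δ + δ + δ) / α := by
        gcongr
        exact Real.exp_le_one_iff.2 (by nlinarith)
    _ ≤ max K (2 * E + M * (2 * A)) + α * V / X.minStep * z + 3 * δ / α := by
        rw [mul_one, show δ + δ + δ = 3 * δ by ring]
        gcongr
        exact le_max_right _ _

theorem eventually_le_mul_sqrt (hθ : 0 < θ) (hθρ : θ ≤ ρ) (hA : 0 ≤ A) {ε : ℝ} (hε : 0 < ε) :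
    ∀ᶠ y in atTop, D y ≤ ε * √y := by
  have hV0 : 0 ≤ V := hV.nonneg fun p => mul_nonneg (X.weight_pos p).le (sq_nonneg _)
  set G := V / X.minStep + 3
  have hG : 0 < G := by have := X.minStep_pos; positivity
  set η := ε / G
  have hη : 0 < η := div_pos hε hG
  obtain ⟨K, hK⟩ := hD.exists_two_mul_le hh hξ hV hθ hθρ hA (by positivity : 0 < η ^ 2)
  have hsqrt : ∀ᶠ y in atTop, K ≤ ε * √y :=
    (Real.tendsto_sqrt_atTop.const_mul_atTop hε).eventually_ge_atTop K
  filter_upwards [eventually_ge_atTop K, eventually_gt_atTop 0, hsqrt] with y hyK hy0 hKy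
  have : 0 < √y := Real.sqrt_pos.2 hy0
  have hbound := hK (η / √y) (by positivity) y hyK
  have hbalance : η / √y * V / X.minStep * y + 3 * η ^ 2 / (η / √y) = ε * √y := by
    calc η / √y * V / X.minStep * y + 3 * η ^ 2 / (η / √y)
        = η * (V / X.minStep * (y / √y) + 3 * √y) := by field_simp
      _ = η * G * √y := by rw [Real.div_sqrt]; ring
      _ = ε * √y := by rw [div_mul_cancel₀ _ hG.ne']
  linarith

end IsCovarianceSubsolution

/-! ### The mean index -/

/-- `b y` is the tilted renewal function `∑ₘ m * E e ^ (-ρ * (y - Sₘ)) 1_{Sₘ ≤ y}` weighted by the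
index `m`, characterized by its renewal equation; `h` is the unweighted one. -/
structure IsIndexRenewalFunction (h b : ℝ → ℝ) : Prop where
  eq_zero : ∀ y < 0, b y = 0
  hasSum : ∀ y, 0 ≤ y →
    HasSum (fun p => X.weight p * (b (y - X.step p) + h (y - X.step p))) (b y)

/-- The centred variables `1 - step / E X`, the increments of the martingale `m - Sₘ / E X`. -/
def centredStep (p : ι) : ℝ := 1 - X.step p / X.mean

lemma hasSum_centredStep : HasSum (fun p => X.weight p * X.centredStep p) 0 := by
  have := X.hasSum_weight.sub (X.hasSum_mean.div_const X.mean)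
  rw [div_self X.mean_pos.ne', sub_self] at this
  refine this.congr_fun fun p => ?_
  rw [centredStep]
  ring

lemma summable_weight_mul_centredStep_sq :
    Summable fun p => X.weight p * X.centredStep p ^ 2 := by
  refine ((X.hasSum_weight.summable.sub (X.hasSum_mean.summable.mul_right (2 / X.mean))).add
    (X.summable_weight_mul_step_sq.div_const (X.mean ^ 2))).congr fun p => ?_
  rw [centredStep]
  ring

namespace IsIndexRenewalFunction

variable {X} {ρ : ℝ} {h b : ℝ → ℝ} (hb : X.IsIndexRenewalFunction h b)
  (hh : X.IsRenewalFunction ρ h)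

include hb hh

lemma nonneg (y : ℝ) : 0 ≤ b y := by
  refine X.step_induction (T := univ) (K := 0) (motive := fun y => 0 ≤ b y) (fun _ _ _ => trivial)
    (fun y _ hy => (hb.eq_zero y hy).ge) (fun y _ hy ih => ?_) (mem_univ y)
  exact X.le_hasSum_of_le (hb.hasSum y hy) fun p => add_nonneg (ih p) (hh.nonneg _)

lemma le_mul_max {C : ℝ} (hC : ∀ y, h y ≤ C) (y : ℝ) : b y ≤ C / X.minStep * max y 0 := by
  have hC' : 0 ≤ C / X.minStep := div_nonneg ((hh.nonneg 0).trans (hC 0)) X.minStep_pos.le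
  refine X.step_induction (T := univ) (K := 0) (motive := fun y => b y ≤ C / X.minStep * max y 0)
    (fun _ _ _ => trivial) (fun y _ hy => ?_) (fun y _ hy ih => ?_) (mem_univ y)
  · rw [hb.eq_zero y hy, max_eq_right hy.le, mul_zero]
  · rw [max_eq_left hy]
    refine X.hasSum_le_of_le (hb.hasSum y hy) fun p => ?_
    obtain hlt | hge := lt_or_ge (y - X.step p) 0
    · rw [hb.eq_zero _ hlt, hh.eq_zero _ hlt, add_zero]
      exact mul_nonneg hC' hy
    · calc b (y - X.step p) + h (y - X.step p) ≤ C / X.minStep * (y - X.step p) + C := by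
            have := ih p
            rw [max_eq_left hge] at this
            exact add_le_add this (hC _)
        _ ≤ C / X.minStep * (y - X.minStep) + C := by
            gcongr
            exact X.minStep_le p
        _ = C / X.minStep * y := by rw [mul_sub, div_mul_cancel₀ _ X.minStep_pos.ne']; ring

lemma hasSum_defect {y : ℝ} (hy : 0 ≤ y) :
    HasSum (fun p => X.weight p * (b (y - X.step p) - (y - X.step p) / X.mean * h (y - X.step p) +
        X.centredStep p * h (y - X.step p)))
      (b y - y / X.mean * h y + y / X.mean * Real.exp (-ρ * y)) := by
  have := (hb.hasSum y hy).sub ((hh.hasSum y hy).mul_left (y / X.mean))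
  rw [show b y - y / X.mean * h y + y / X.mean * Real.exp (-ρ * y) =
    b y - y / X.mean * (h y - Real.exp (-ρ * y)) by ring]
  refine this.congr_fun fun p => ?_
  rw [centredStep]
  ring

lemma isCovarianceSubsolution (hρ : 0 < ρ) : X.IsCovarianceSubsolution X.centredStep h 0 (ρ / 2)
    (fun y => b y - y / X.mean * h y) where
  le_of_lt K := by
    obtain ⟨C, hC⟩ := hh.exists_le hρ
    have hC' : 0 ≤ C / X.minStep := div_nonneg ((hh.nonneg 0).trans (hC 0)) X.minStep_pos.le
    refine ⟨C / X.minStep * max K 0, fun y hy => ?_⟩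
    calc b y - y / X.mean * h y ≤ b y := sub_le_self _ (hh.div_mul_apply_nonneg X.mean_pos.le y)
      _ ≤ C / X.minStep * max y 0 := hb.le_mul_max hh hC y
      _ ≤ C / X.minStep * max K 0 := by gcongr
  hasSum y hy := ⟨_, hb.hasSum_defect hh hy, by
    have := X.mean_pos
    rw [zero_mul, add_zero]
    exact le_add_of_nonneg_right (by positivity)⟩

lemma isCovarianceSubsolution_neg (hρ : 0 < ρ) :
    X.IsCovarianceSubsolution (-X.centredStep) h (2 / (ρ * X.mean)) (ρ / 2)
      (fun y => y / X.mean * h y - b y) where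
  le_of_lt K := by
    have hm := X.mean_pos
    obtain ⟨C, hC⟩ := hh.exists_le hρ
    have hC0 : 0 ≤ C := (hh.nonneg 0).trans (hC 0)
    refine ⟨max K 0 / X.mean * C, fun y hy => ?_⟩
    calc y / X.mean * h y - b y ≤ y / X.mean * h y := sub_le_self _ (hb.nonneg hh y)
      _ ≤ max y 0 / X.mean * C :=
        mul_le_mul (by gcongr; exact le_max_left _ _) (hC y) (hh.nonneg y) (by positivity)
      _ ≤ max K 0 / X.mean * C := by gcongr
  hasSum y hy := by
    refine ⟨-(b y - y / X.mean * h y + y / X.mean * Real.exp (-ρ * y)),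
      (hb.hasSum_defect hh hy).neg.congr_fun fun p => ?_, ?_⟩
    · rw [Pi.neg_apply]
      ring
    · have hm := X.mean_pos
      have hlin : ρ / 2 * y ≤ Real.exp (ρ / 2 * y) := by linarith [Real.add_one_le_exp (ρ / 2 * y)]
      have hexp : Real.exp (-(ρ / 2) * y) = Real.exp (ρ / 2 * y) * Real.exp (-ρ * y) := by
        rw [← Real.exp_add]
        ring_nf
      have herror : y / X.mean * Real.exp (-ρ * y) ≤
          2 / (ρ * X.mean) * Real.exp (-(ρ / 2) * y) := by
        calc y / X.mean * Real.exp (-ρ * y)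
            = 2 / (ρ * X.mean) * (ρ / 2 * y * Real.exp (-ρ * y)) := by field_simp
          _ ≤ 2 / (ρ * X.mean) * (Real.exp (ρ / 2 * y) * Real.exp (-ρ * y)) := by gcongr
          _ = 2 / (ρ * X.mean) * Real.exp (-(ρ / 2) * y) := by rw [hexp]
      linarith

lemma eventually_abs_sub_le (hρ : 0 < ρ) {ε : ℝ} (hε : 0 < ε) :
    ∀ᶠ y in atTop, |b y - y / X.mean * h y| ≤ ε * √y := by
  have hm := X.mean_pos
  have hξ := X.hasSum_centredStep
  obtain ⟨V, hV⟩ := X.summable_weight_mul_centredStep_sq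
  have hξ' : HasSum (fun p => X.weight p * (-X.centredStep) p) 0 := by
    simpa only [Pi.neg_apply, mul_neg, neg_zero] using hξ.neg
  have hV' : HasSum (fun p => X.weight p * (-X.centredStep) p ^ 2) V := by
    simpa only [Pi.neg_apply, neg_sq] using hV
  filter_upwards [(hb.isCovarianceSubsolution hh hρ).eventually_le_mul_sqrt hh hξ hV (half_pos hρ)
      (half_le_self hρ.le) le_rfl hε,
    (hb.isCovarianceSubsolution_neg hh hρ).eventually_le_mul_sqrt hh hξ' hV' (half_pos hρ)
      (half_le_self hρ.le) (by positivity) hε] with y hupper hlower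
  exact abs_le'.2 ⟨hupper, by rwa [neg_sub]⟩

theorem isLittleO_sqrt (hρ : 0 < ρ) : (fun y => b y / h y - y / X.mean) =o[atTop] Real.sqrt := by
  obtain ⟨c, hc, hch⟩ := hh.exists_pos_le hρ
  refine isLittleO_iff.2 fun ε hε => ?_
  filter_upwards [hch, hb.eventually_abs_sub_le hh hρ (mul_pos hε hc)] with y hy hD
  have hhy : 0 < h y := hc.trans_le hy
  rw [Real.norm_eq_abs, Real.norm_of_nonneg (Real.sqrt_nonneg y), div_sub' hhy.ne', abs_div,
    abs_of_pos hhy, div_le_iff₀ hhy, mul_comm (h y)]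
  calc |b y - y / X.mean * h y| ≤ ε * c * √y := hD
    _ ≤ ε * h y * √y := by gcongr
    _ = ε * √y * h y := mul_right_comm _ _ _

end IsIndexRenewalFunction

end StepLaw

/-! ### Counting ordered factorizations -/

section Counting

variable {P : Set ℕ}

/-- The ordered factorizations into `m` elements of `P` of the integers up to `N`. -/
abbrev OrderedFactorization (P : Set ℕ) (m N : ℕ) : Type :=
  {t : Fin m → ℕ // (∀ i, t i ∈ P) ∧ ∏ i, t i ≤ N}

/-- The cumulative count `∑ n ≤ N, a_m(n)`. -/
def cumCount (P : Set ℕ) (m N : ℕ) : ℕ := ∑ n ∈ Finset.Icc 1 N, af P m n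

/-- The numerator `∑ n ≤ N, ∑ m, m * a_m(n)` of the mean number of factors. -/
def indexSum (P : Set ℕ) (N : ℕ) : ℝ := ∑ n ∈ Finset.Icc 1 N, ∑' m : ℕ, (m : ℝ) * (af P m n : ℝ)

lemma hasSum_one_natCard (α : Type*) [Finite α] : HasSum (fun _ : α => (1 : ℝ)) (Nat.card α) := by
  have := Fintype.ofFinite α
  simpa using hasSum_fintype fun _ : α => (1 : ℝ)

lemma Acum_zero : Acum P 0 = 0 := by simp [Acum]

lemma indexSum_zero : indexSum P 0 = 0 := by simp [indexSum]

lemma cumCount_zero {N : ℕ} (hN : 1 ≤ N) : cumCount P 0 N = 1 := by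
  rw [cumCount, Finset.sum_eq_single_of_mem 1 (Finset.mem_Icc.2 ⟨le_rfl, hN⟩)]
  · simp [af]
  · intro n _ hn
    simp [af, hn.symm]

variable (hP : ∀ n ∈ P, 2 ≤ n)

include hP

lemma coe_pos_of_two_le (p : P) : 0 < (p : ℕ) := two_pos.trans_le (hP p p.2)

lemma prod_pos_of_mem {m : ℕ} {t : Fin m → ℕ} (ht : ∀ i, t i ∈ P) : 0 < ∏ i, t i :=
  Finset.prod_pos fun i _ => coe_pos_of_two_le hP ⟨t i, ht i⟩

lemma af_eq_zero_of_lt {m n : ℕ} (h : n < m) : af P m n = 0 := by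
  refine Nat.card_eq_zero.2 (.inl ⟨fun ⟨t, ht, hn⟩ => ?_⟩)
  have hpow : 2 ^ m ≤ ∏ i, t i := by
    simpa using Finset.prod_le_prod' fun (i : Fin m) (_ : i ∈ Finset.univ) => hP _ (ht i)
  exact absurd (hpow.trans hn.le) (h.trans m.lt_two_pow_self).not_ge

lemma finite_orderedFactorization (m N : ℕ) : Finite (OrderedFactorization P m N) :=
  ((finite_Iic (fun _ : Fin m => N)).subset fun _ ht i =>
    (Nat.le_of_dvd (prod_pos_of_mem hP ht.1) (Finset.dvd_prod_of_mem _ (Finset.mem_univ i))).trans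
      ht.2).to_subtype

lemma cumCount_eq_card (m N : ℕ) : cumCount P m N = Nat.card (OrderedFactorization P m N) := by
  have := finite_orderedFactorization hP m N
  let product (t : OrderedFactorization P m N) : Finset.Icc 1 N :=
    ⟨∏ i, t.1 i, Finset.mem_Icc.2 ⟨prod_pos_of_mem hP t.2.1, t.2.2⟩⟩
  rw [← Nat.card_congr (Equiv.sigmaFiberEquiv product), Nat.card_sigma, cumCount,
    ← Finset.sum_coe_sort]
  refine Finset.sum_congr rfl fun n _ => Nat.card_congr ⟨fun t => ⟨⟨t.1, t.2.1, ?_⟩, ?_⟩,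
    fun t => ⟨t.1.1, t.1.2.1, ?_⟩, fun _ => rfl, fun _ => rfl⟩
  · exact t.2.2.trans_le (Finset.mem_Icc.1 n.2).2
  · exact Subtype.ext t.2.2
  · exact congrArg Subtype.val t.2

/-- Splitting off the first factor. -/
def orderedFactorizationSuccEquiv (m N : ℕ) :
    OrderedFactorization P (m + 1) N ≃ Σ p : P, OrderedFactorization P m (N / p) where
  toFun t := ⟨⟨t.1 0, t.2.1 0⟩, Fin.tail t.1, fun i => t.2.1 i.succ, by
    rw [Nat.le_div_iff_mul_le (coe_pos_of_two_le hP ⟨t.1 0, t.2.1 0⟩), mul_comm]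
    exact (Fin.prod_univ_succ t.1).symm.trans_le t.2.2⟩
  invFun s := ⟨Fin.cons s.1 s.2.1, Fin.cases s.1.2 s.2.2.1, by
    rw [Fin.prod_cons, mul_comm]
    exact (Nat.le_div_iff_mul_le (coe_pos_of_two_le hP s.1)).1 s.2.2.2⟩
  left_inv t := Subtype.ext (Fin.cons_self_tail t.1)
  right_inv _ := rfl

lemma hasSum_cumCount_div (m N : ℕ) :
    HasSum (fun p : P => (cumCount P m (N / p) : ℝ)) (cumCount P (m + 1) N) := by
  have := finite_orderedFactorization hP
  have := Finite.of_equiv _ (orderedFactorizationSuccEquiv hP m N)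
  simp only [cumCount_eq_card hP, Nat.card_congr (orderedFactorizationSuccEquiv hP m N)]
  exact (hasSum_one_natCard _).sigma fun p => hasSum_one_natCard _

lemma sum_tsum_mul_af (g : ℕ → ℝ) {N M : ℕ} (h : N < M) :
    ∑ n ∈ Finset.Icc 1 N, ∑' m, g m * (af P m n : ℝ) =
      ∑ m ∈ Finset.range M, g m * (cumCount P m N : ℝ) := by
  simp only [cumCount, Nat.cast_sum, Finset.mul_sum]
  rw [Finset.sum_comm]
  refine Finset.sum_congr rfl fun n hn => tsum_eq_sum fun m hm => ?_
  have hnm : n < m := by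
    rw [Finset.mem_range] at hm
    have := (Finset.mem_Icc.1 hn).2
    omega
  rw [af_eq_zero_of_lt hP hnm, Nat.cast_zero, mul_zero]

lemma Acum_eq_sum {N M : ℕ} (h : N < M) :
    Acum P N = ∑ m ∈ Finset.range M, (cumCount P m N : ℝ) := by
  simpa [Acum, aTot] using sum_tsum_mul_af hP (fun _ => 1) h

lemma indexSum_eq_sum {N M : ℕ} (h : N < M) :
    indexSum P N = ∑ m ∈ Finset.range M, (m : ℝ) * (cumCount P m N : ℝ) :=
  sum_tsum_mul_af hP _ h

lemma hasSum_Acum_div {N : ℕ} (hN : 1 ≤ N) :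
    HasSum (fun p : P => Acum P (N / p)) (Acum P N - 1) := by
  rw [Acum_eq_sum hP (N.lt_succ_self.trans (N + 1).lt_succ_self), Finset.sum_range_succ',
    cumCount_zero hN, Nat.cast_one, add_sub_cancel_right]
  refine (hasSum_sum fun m _ => hasSum_cumCount_div hP m N).congr_fun fun p => ?_
  exact Acum_eq_sum hP (Nat.lt_succ_of_le (N.div_le_self p))

lemma hasSum_indexSum_div (N : ℕ) :
    HasSum (fun p : P => indexSum P (N / p) + Acum P (N / p)) (indexSum P N) := by
  rw [indexSum_eq_sum hP (N.lt_succ_self.trans (N + 1).lt_succ_self), Finset.sum_range_succ',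
    Nat.cast_zero, zero_mul, add_zero]
  refine (hasSum_sum fun m _ => (hasSum_cumCount_div hP m N).mul_left _).congr_fun fun p => ?_
  have hlt : N / p < N + 1 := Nat.lt_succ_of_le (N.div_le_self p)
  rw [indexSum_eq_sum hP hlt, Acum_eq_sum hP hlt, ← Finset.sum_add_distrib]
  refine Finset.sum_congr rfl fun m _ => ?_
  push_cast
  ring

end Counting

/-! ### The random walk of the logarithms -/

section LogStep

variable {P : Set ℕ}

lemma exists_summable_rpow_of_kappa_lt {x : ℝ} (hx : kappa P < x) :
    ∃ r < x, Summable fun n : P => ((n : ℕ) : ℝ) ^ (-r) := by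
  obtain ⟨_, ⟨r, rfl, hr⟩, hrx⟩ := sInf_lt_iff.1 hx
  exact ⟨r, EReal.coe_lt_coe_iff.1 hrx, hr⟩

lemma hasSum_rpow_of_Pval_eq_one {x : ℝ} (hx : Pval P x = 1) :
    HasSum (fun n : P => ((n : ℕ) : ℝ) ^ (-x)) 1 := by
  have hsum : Summable fun n : P => ((n : ℕ) : ℝ) ^ (-x) := by
    by_contra h
    exact zero_ne_one ((tsum_eq_zero_of_not_summable h).symm.trans hx)
  exact hx ▸ hsum.hasSum

lemma floor_exp_eq_zero {y : ℝ} (hy : y < 0) : ⌊Real.exp y⌋₊ = 0 :=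
  Nat.floor_eq_zero.2 (by simpa using hy)

/-- The tilted function `y ↦ e ^ (-ρ * y) f(e ^ y)` of a function `f` on the integers. -/
def expTilt (ρ : ℝ) (f : ℕ → ℝ) (y : ℝ) : ℝ := Real.exp (-ρ * y) * f ⌊Real.exp y⌋₊

lemma expTilt_eq_zero (ρ : ℝ) {f : ℕ → ℝ} (hf : f 0 = 0) {y : ℝ} (hy : y < 0) :
    expTilt ρ f y = 0 := by
  rw [expTilt, floor_exp_eq_zero hy, hf, mul_zero]

lemma expTilt_log_div_expTilt_log (ρ : ℝ) (f g : ℕ → ℝ) {N : ℕ} (hN : 0 < N) :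
    expTilt ρ f (Real.log N) / expTilt ρ g (Real.log N) = f N / g N := by
  rw [expTilt, expTilt, Real.exp_log (Nat.cast_pos.2 hN), Nat.floor_natCast,
    mul_div_mul_left _ _ (Real.exp_pos _).ne']

variable (hP : ∀ n ∈ P, 2 ≤ n)

include hP

lemma rpow_mul_expTilt_sub_log (ρ : ℝ) (f : ℕ → ℝ) (y : ℝ) (p : P) :
    ((p : ℕ) : ℝ) ^ (-ρ) * expTilt ρ f (y - Real.log p) =
      Real.exp (-ρ * y) * f (⌊Real.exp y⌋₊ / p) := by
  have hp : (0 : ℝ) < p := Nat.cast_pos.2 (coe_pos_of_two_le hP p)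
  rw [expTilt, Real.exp_sub, Real.exp_log hp, Nat.floor_div_natCast, Real.rpow_def_of_pos hp,
    ← mul_assoc, ← Real.exp_add]
  ring_nf

/-- The law of the step `log n`, which takes this value with probability `n ^ (-ρ)`. -/
def logStepLaw {ρ r : ℝ} (hr : r < ρ) (hsum : Summable fun n : P => ((n : ℕ) : ℝ) ^ (-r))
    (hρ : Pval P ρ = 1) : StepLaw P where
  weight p := ((p : ℕ) : ℝ) ^ (-ρ)
  step p := Real.log p
  minStep := Real.log 2
  rate := ρ - r
  weight_pos p := Real.rpow_pos_of_pos (Nat.cast_pos.2 (coe_pos_of_two_le hP p)) _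
  hasSum_weight := hasSum_rpow_of_Pval_eq_one hρ
  minStep_pos := Real.log_pos one_lt_two
  minStep_le p := Real.log_le_log two_pos (by exact_mod_cast hP p p.2)
  rate_pos := sub_pos.2 hr
  summable_exp := hsum.congr fun p => by
    have hp : (0 : ℝ) < p := Nat.cast_pos.2 (coe_pos_of_two_le hP p)
    rw [mul_comm (ρ - r), ← Real.rpow_def_of_pos hp, ← Real.rpow_add hp]
    ring_nf

section

variable {ρ r : ℝ} (hr : r < ρ) (hsum : Summable fun n : P => ((n : ℕ) : ℝ) ^ (-r))
  (hρ : Pval P ρ = 1)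

lemma logStepLaw_mean : (logStepLaw hP hr hsum hρ).mean = -Pderiv1 P ρ := (neg_neg _).symm

lemma isRenewalFunction_expTilt_Acum :
    (logStepLaw hP hr hsum hρ).IsRenewalFunction ρ (expTilt ρ (Acum P)) where
  eq_zero _ := expTilt_eq_zero ρ Acum_zero
  hasSum y hy := by
    have hN : 1 ≤ ⌊Real.exp y⌋₊ := Nat.one_le_floor_iff _ |>.2 (Real.one_le_exp hy)
    have := (hasSum_Acum_div hP hN).mul_left (Real.exp (-ρ * y))
    rw [mul_sub, mul_one] at this
    exact this.congr_fun fun p => rpow_mul_expTilt_sub_log hP ρ _ y p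

lemma isIndexRenewalFunction_expTilt_indexSum : (logStepLaw hP hr hsum hρ).IsIndexRenewalFunction
    (expTilt ρ (Acum P)) (expTilt ρ (indexSum P)) where
  eq_zero _ := expTilt_eq_zero ρ indexSum_zero
  hasSum y _ := by
    refine ((hasSum_indexSum_div hP ⌊Real.exp y⌋₊).mul_left (Real.exp (-ρ * y))).congr_fun
      fun p => ?_
    rw [mul_add (Real.exp _), ← rpow_mul_expTilt_sub_log hP, ← rpow_mul_expTilt_sub_log hP,
      ← mul_add]
    rfl

end

end LogStep

lemma isLittleO_sqrt_id : Real.sqrt =o[atTop] fun y : ℝ => y := by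
  refine ((isLittleO_pow_pow_atTop_of_lt (𝕜 := ℝ) one_lt_two).comp_tendsto
    Real.tendsto_sqrt_atTop).congr' (.of_eq (funext fun y => pow_one √y)) ?_
  filter_upwards [eventually_ge_atTop 0] with y hy
  exact Real.sq_sqrt hy

/-- **The mean of `Y_N`.** `E(Y_N) = μ log N + o(√(log N))` as `N → ∞`;
in particular `E(Y_N) ∼ μ log N`. -/
theorem ordered_factorizations_mean
    (P : Set ℕ) (hP : ∀ n ∈ P, 2 ≤ n) (hP2 : P.Nontrivial)
    (hκ : 1 < PvalE P (kappa P))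
    (ρ : ℝ) (hρ0 : 0 < ρ) (hρκ : kappa P < (ρ : EReal)) (hρ1 : Pval P ρ = 1)
    (μ : ℝ) (hμ : μ = -1 / Pderiv1 P ρ) :
    ((fun N : ℕ =>
        (∑ n ∈ Finset.Icc 1 N, ∑' m : ℕ, (m : ℝ) * (af P m n : ℝ)) / Acum P N
          - μ * Real.log N)
      =o[atTop] fun N : ℕ => Real.sqrt (Real.log N)) ∧
    Asymptotics.IsEquivalent atTop
      (fun N : ℕ =>
        (∑ n ∈ Finset.Icc 1 N, ∑' m : ℕ, (m : ℝ) * (af P m n : ℝ)) / Acum P N)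
      (fun N : ℕ => μ * Real.log N) := by
  obtain ⟨r, hrρ, hr⟩ := exists_summable_rpow_of_kappa_lt hρκ
  let X : StepLaw P := logStepLaw hP hrρ hr hρ1
  have hmean : X.mean = μ⁻¹ := by
    rw [hμ, inv_div, div_neg, div_one]
    exact logStepLaw_mean hP hrρ hr hρ1
  have hμ0 : μ ≠ 0 := (inv_pos.1 (hmean ▸ X.mean_pos)).ne'
  have hrenewal := (isIndexRenewalFunction_expTilt_indexSum hP hrρ hr hρ1).isLittleO_sqrt
    (isRenewalFunction_expTilt_Acum hP hrρ hr hρ1) hρ0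
  have hlog : Tendsto (fun N : ℕ => Real.log N) atTop atTop :=
    Real.tendsto_log_atTop.comp tendsto_natCast_atTop_atTop
  have hsqrt : (fun N : ℕ => indexSum P N / Acum P N - μ * Real.log N)
      =o[atTop] fun N : ℕ => Real.sqrt (Real.log N) := by
    refine (hrenewal.comp_tendsto hlog).congr' ?_ .rfl
    filter_upwards [eventually_gt_atTop 0] with N hN
    simp only [Function.comp_apply]
    rw [expTilt_log_div_expTilt_log ρ _ _ hN, hmean, div_inv_eq_mul, mul_comm μ]
  exact ⟨hsqrt, (hsqrt.trans (isLittleO_sqrt_id.comp_tendsto hlog)).trans_isBigO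
    (isBigO_self_const_mul hμ0 _ _)⟩
end
end

section
/- For every complex s and z with e^{Re(z)} 𝒫(Re(s)) < 1, the double series Σ_{n≥1} n^{−s} Σ_{m≥0} a_m(n) e^{mz} converges absolutely and equals 1/(1 − e^{z} 𝒫(s)). -/
open scoped BigOperators ENNReal
open Filter Asymptotics

noncomputable section

/-- The Dirichlet series `𝒫(s) = Σ_{n ∈ 𝒫} n^{-s}` at a complex point. -/
def PvalC (P : Set ℕ) (s : ℂ) : ℂ := ∑' n : P, ((n : ℕ) : ℂ) ^ (-s)

/-!
Expanding `(e ^ z 𝒫(s)) ^ m` gives one term `e ^ (m z) (n₁ ⋯ n_m) ^ (-s)` for each `m`-tuple of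
elements of `𝒫`, so the geometric series `∑ (e ^ z 𝒫(s)) ^ m` is a sum over tuples of all lengths.
It converges absolutely because the norms form the geometric series of ratio `e ^ (Re z) 𝒫(Re s)`.
Grouping the tuples by their product `n` and length `m`, a pair that occurs `a_m(n)` times, gives
the double series. Any completely multiplicative function can take the place of `n ↦ n ^ (-s)`.
-/

section TupleSums

variable {ι E R 𝕜 : Type*}

lemma summable_norm_prod_fin [NormedCommRing R] {f : ι → R} (hf : Summable fun i => ‖f i‖)
    (m : ℕ) : Summable fun t : Fin m → ι => ‖∏ i, f (t i)‖ := by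
  induction m with
  | zero => exact (hasSum_fintype _).summable
  | succ m ih =>
    rw [← (Fin.consEquiv fun _ : Fin (m + 1) => ι).summable_iff]
    simpa [Function.comp_def, Fin.consEquiv, Fin.prod_univ_succ] using hf.mul_norm ih

lemma hasSum_prod_fin [NormedCommRing R] [CompleteSpace R] {f : ι → R}
    (hf : Summable fun i => ‖f i‖) (m : ℕ) :
    HasSum (fun t : Fin m → ι => ∏ i, f (t i)) ((∑' i, f i) ^ m) := by
  induction m with
  | zero => simp [hasSum_unique]
  | succ m ih =>
    rw [← (Fin.consEquiv fun _ : Fin (m + 1) => ι).hasSum_iff, pow_succ']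
    simpa [Function.comp_def, Fin.consEquiv, Fin.prod_univ_succ] using
      hf.of_norm.hasSum.mul ih (hf.mul_norm (summable_norm_prod_fin hf m)).of_norm

lemma tsum_norm_lt_one_of_tsum_enorm_lt_one [SeminormedAddCommGroup E] {f : ι → E}
    (h : ∑' i, ‖f i‖ₑ < 1) : ∑' i, ‖f i‖ < 1 := by
  have hf : Summable fun i => ‖f i‖ := tsum_enorm_ne_top_iff_summable_norm.mp h.ne_top
  simpa only [← ofReal_norm, ← ENNReal.ofReal_tsum_of_nonneg (fun _ => norm_nonneg _) hf,
    ENNReal.ofReal_lt_one] using h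

lemma summable_norm_sigma_prod_fin [NormedCommRing R] [NormOneClass R] {f : ι → R}
    (h : ∑' i, ‖f i‖ₑ < 1) : Summable fun t : Σ m, Fin m → ι => ‖∏ i, f (t.2 i)‖ := by
  have hf : Summable fun i => ‖f i‖ := tsum_enorm_ne_top_iff_summable_norm.mp h.ne_top
  have hpow (m : ℕ) : HasSum (fun t : Fin m → ι => ∏ i, ‖f (t i)‖) ((∑' i, ‖f i‖) ^ m) :=
    hasSum_prod_fin (by simpa only [norm_norm] using hf) m
  have hprod : Summable fun t : Σ m, Fin m → ι => ∏ i, ‖f (t.2 i)‖ := by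
    rw [summable_sigma_of_nonneg fun _ => Finset.prod_nonneg fun _ _ => norm_nonneg _]
    refine ⟨fun m => (hpow m).summable, ?_⟩
    simpa only [(hpow _).tsum_eq] using
      summable_geometric_of_lt_one (tsum_nonneg fun _ => norm_nonneg _)
        (tsum_norm_lt_one_of_tsum_enorm_lt_one h)
  exact hprod.of_nonneg_of_le (fun _ => norm_nonneg _) fun _ => Finset.norm_prod_le _ _

lemma hasSum_sigma_prod_fin [NormedField 𝕜] [CompleteSpace 𝕜] {f : ι → 𝕜}
    (h : ∑' i, ‖f i‖ₑ < 1) :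
    HasSum (fun t : Σ m, Fin m → ι => ∏ i, f (t.2 i)) (1 - ∑' i, f i)⁻¹ := by
  have hf : Summable fun i => ‖f i‖ := tsum_enorm_ne_top_iff_summable_norm.mp h.ne_top
  have hlt : ‖∑' i, f i‖ < 1 :=
    (norm_tsum_le_tsum_norm hf).trans_lt (tsum_norm_lt_one_of_tsum_enorm_lt_one h)
  exact (hasSum_geometric_of_norm_lt_one hlt).sigma_of_hasSum (hasSum_prod_fin hf)
    (summable_norm_sigma_prod_fin h).of_norm

end TupleSums

-- An infinite fibre, where `Nat.card` is `0`, is harmless: summability forces `g` to vanish there.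
lemma hasSum_card_fiber_nsmul {α β E : Type*} [AddCommGroup E] [UniformSpace E]
    [IsUniformAddGroup E] [CompleteSpace E] [T2Space E] {T : α → β} {g : β → E} {a : E}
    (h : HasSum (fun x => g (T x)) a) :
    HasSum (fun b => Nat.card (T ⁻¹' {b}) • g b) a := by
  have hfiber (b : β) : ∑' x : T ⁻¹' {b}, g (T x) = Nat.card (T ⁻¹' {b}) • g b := by
    rw [tsum_congr fun x : T ⁻¹' {b} => congrArg g x.2, tsum_const]
  simpa only [hfiber] using h.tsum_fiberwise T

/-- The product and the length of a tuple of elements of `P`, so that `af P m n` counts the tuples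
sent to `(n, m)`; the order of the pair is that of the double series. -/
def prodLength (P : Set ℕ) (t : Σ m, Fin m → P) : ℕ × ℕ :=
  (∏ i, (t.2 i : ℕ), t.1)

lemma card_prodLength_fiber (P : Set ℕ) (n m : ℕ) :
    Nat.card (prodLength P ⁻¹' {(n, m)}) = af P m n := by
  let toFiber (t : {t : Fin m → ℕ // (∀ i, t i ∈ P) ∧ ∏ i, t i = n}) :
      prodLength P ⁻¹' {(n, m)} :=
    ⟨⟨m, fun i => ⟨t.1 i, t.2.1 i⟩⟩, Prod.ext t.2.2 rfl⟩
  refine (Nat.card_congr (Equiv.ofBijective toFiber ⟨fun t u htu => ?_, ?_⟩)).symm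
  · simpa [toFiber, funext_iff, Subtype.ext_iff] using htu
  · rintro ⟨⟨_, t⟩, ht⟩
    obtain ⟨rfl, rfl⟩ := Prod.ext_iff.mp ht
    exact ⟨⟨fun i => t i, fun i => (t i).2, rfl⟩, rfl⟩

theorem bivariate_generating_function_general {𝕜 : Type*} [NormedField 𝕜] [CompleteSpace 𝕜]
    (P : Set ℕ) (f : ℕ →* 𝕜) (w : 𝕜) (h : ‖w‖ₑ * ∑' n : P, ‖f n‖ₑ < 1) :
    Summable (fun p : ℕ × ℕ => ‖f p.1 * ((af P p.2 p.1 : 𝕜) * w ^ p.2)‖) ∧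
    (∑' n : ℕ, f n * ∑' m : ℕ, (af P m n : 𝕜) * w ^ m) = 1 / (1 - w * ∑' n : P, f n) := by
  let g (p : ℕ × ℕ) : 𝕜 := f p.1 * w ^ p.2
  have hlt : ∑' n : P, ‖w * f n‖ₑ < 1 := by simpa only [enorm_mul, ENNReal.tsum_mul_left] using h
  have hg (t : Σ m, Fin m → P) : ∏ i, w * f (t.2 i) = g (prodLength P t) := by
    simp [g, prodLength, Finset.prod_mul_distrib, mul_comm]
  have hterm (p : ℕ × ℕ) :
      Nat.card (prodLength P ⁻¹' {p}) • g p = f p.1 * ((af P p.2 p.1 : 𝕜) * w ^ p.2) := by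
    rw [card_prodLength_fiber, nsmul_eq_mul, mul_left_comm]
  have hnorm : Summable fun p : ℕ × ℕ => ‖f p.1 * ((af P p.2 p.1 : 𝕜) * w ^ p.2)‖ := by
    have htuples : Summable fun t => ‖g (prodLength P t)‖ := by
      simpa only [hg] using summable_norm_sigma_prod_fin hlt
    refine (hasSum_card_fiber_nsmul (g := fun p => ‖g p‖) htuples.hasSum).summable.of_nonneg_of_le
      (fun _ => norm_nonneg _) fun p => ?_
    rw [← hterm, nsmul_eq_mul (_ : ℕ) ‖g p‖]
    exact norm_nsmul_le
  have hsum : HasSum (fun p : ℕ × ℕ => f p.1 * ((af P p.2 p.1 : 𝕜) * w ^ p.2))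
      (1 - w * ∑' n : P, f n)⁻¹ := by
    have htuples : HasSum (fun t => g (prodLength P t)) (1 - w * ∑' n : P, f n)⁻¹ := by
      simpa only [hg, tsum_mul_left] using hasSum_sigma_prod_fin hlt
    simpa only [hterm] using hasSum_card_fiber_nsmul htuples
  refine ⟨hnorm, ?_⟩
  rw [one_div, ← hsum.tsum_eq, hsum.summable.tsum_prod]
  simp only [tsum_mul_left]

/-- The Dirichlet weight `n ↦ n ^ s` as a completely multiplicative function. It is not a
`ℕ →*₀ ℂ` because `0 ^ 0 = 1` at `s = 0`. -/
def natCpowHom (s : ℂ) : ℕ →* ℂ where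
  toFun n := (n : ℂ) ^ s
  map_one' := by simp
  map_mul' m n := by rw [Nat.cast_mul, Complex.natCast_mul_natCast_cpow]

lemma enorm_natCpowHom {n : ℕ} (hn : 0 < n) (s : ℂ) :
    ‖natCpowHom s n‖ₑ = ENNReal.ofReal ((n : ℝ) ^ s.re) := by
  rw [← ofReal_norm]
  exact congrArg ENNReal.ofReal (Complex.norm_natCast_cpow_of_pos hn s)

/-- **The bivariate generating identity.** If `e^{Re z} 𝒫(Re s) < 1` (in `[0,∞]`), then the
double series `Σ_{n ≥ 1} n^{-s} Σ_{m ≥ 0} a_m(n) e^{mz}` converges absolutely and equals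
`1/(1 - e^z 𝒫(s))`. -/
theorem bivariate_generating_function
    (P : Set ℕ) (hP : ∀ n ∈ P, 2 ≤ n) (s z : ℂ)
    (h : ENNReal.ofReal (Real.exp z.re) *
        (∑' n : P, ENNReal.ofReal (((n : ℕ) : ℝ) ^ (-s.re))) < 1) :
    Summable (fun p : ℕ × ℕ =>
        ‖((p.1 : ℂ) ^ (-s)) * ((af P p.2 p.1 : ℂ) * Complex.exp ((p.2 : ℂ) * z))‖) ∧
    (∑' n : ℕ, (n : ℂ) ^ (-s) * ∑' m : ℕ, (af P m n : ℂ) * Complex.exp ((m : ℂ) * z))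
      = 1 / (1 - Complex.exp z * PvalC P s) := by
  have hP_enorm (n : P) :
      ‖natCpowHom (-s) n‖ₑ = ENNReal.ofReal (((n : ℕ) : ℝ) ^ (-s.re)) :=
    enorm_natCpowHom (two_pos.trans_le (hP n n.2)) (-s)
  have hlt : ‖Complex.exp z‖ₑ * ∑' n : P, ‖natCpowHom (-s) n‖ₑ < 1 := by
    simpa only [hP_enorm, ← ofReal_norm (Complex.exp z), Complex.norm_exp] using h
  simp only [Complex.exp_nat_mul]
  exact bivariate_generating_function_general P (natCpowHom (-s)) (Complex.exp z) hlt
end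
end
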